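/- arXiv:1409.1729 — 10 statements merged into one kernel-verified Lean document; each statement's English description precedes it below -/
import Mathlib

section
/- Let (L, α_L) be a Hom-Lie algebra over a field K such that α_L : L → L is surjective, and let (H, α_L|) and (K, α_L|) be ideals of (L, α_L). Then the commutator ([H,K], α_L|), i.e. the subspace of L spanned by all brackets [h,k] with h ∈ H and k ∈ K, is an ideal of (L, α_L). -/
/-!
By skew-symmetry, the Hom-Jacobi identity says that bracketing with `α z` is a twisted derivation:
`[[x, y], α z] = [[x, z], α y] + [α x, [y, z]]`. Hence `[H, I]` absorbs brackets with elements of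
the image of `α`, which is all of `L` when `α` is surjective.
-/

open TensorProduct

/-- A (multiplicative) Hom-Lie algebra structure on a vector space `L` over a field `K`:
a bilinear bracket satisfying skew-symmetry and the Hom-Jacobi identity, together with a
linear endomorphism preserving the bracket. -/
structure HomLieStr (K : Type) [Field K] (L : Type) [AddCommGroup L] [Module K L] : Type where
  br : L →ₗ[K] L →ₗ[K] L
  α : L →ₗ[K] L
  skew : ∀ x y, br x y = - br y x
  jacobi : ∀ x y z, br (α x) (br y z) + br (α z) (br x y) + br (α y) (br z x) = 0
  αbr : ∀ x y, α (br x y) = br (α x) (α y)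

/-- A Hom-action of the Hom-Lie algebra `(L, HL)` on the Hom-Lie algebra `(M, HM)`. -/
structure HomAction {K L M : Type} [Field K] [AddCommGroup L] [Module K L]
    [AddCommGroup M] [Module K M] (HL : HomLieStr K L) (HM : HomLieStr K M) : Type where
  act : L →ₗ[K] M →ₗ[K] M
  ax1 : ∀ x y m, act (HL.br x y) (HM.α m) = act (HL.α x) (act y m) - act (HL.α y) (act x m)
  ax2 : ∀ x m m', act (HL.α x) (HM.br m m') =
    HM.br (act x m) (HM.α m') + HM.br (HM.α m) (act x m')
  ax3 : ∀ x m, HM.α (act x m) = act (HL.α x) (HM.α m)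

/-- A homomorphism of Hom-Lie algebras: a linear map preserving brackets and commuting with
the structure endomorphisms. -/
def IsHomLieHom {K L L' : Type} [Field K] [AddCommGroup L] [Module K L]
    [AddCommGroup L'] [Module K L'] (HL : HomLieStr K L) (HL' : HomLieStr K L')
    (f : L →ₗ[K] L') : Prop :=
  (∀ x y, f (HL.br x y) = HL'.br (f x) (f y)) ∧ (∀ x, f (HL.α x) = HL'.α (f x))

/-- Compatibility of two Hom-actions of `(M, HM)` and `(N, HN)` on each other. -/
def Compatible {K M N : Type} [Field K] [AddCommGroup M] [Module K M]
    [AddCommGroup N] [Module K N] {HM : HomLieStr K M} {HN : HomLieStr K N}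
    (aMN : HomAction HM HN) (aNM : HomAction HN HM) : Prop :=
  (∀ m n m', aNM.act (aMN.act m n) m' = HM.br m' (aNM.act n m)) ∧
  (∀ n m n', aMN.act (aNM.act n m) n' = HN.br n' (aMN.act m n))

/-- The subspace `D(M,N)` of `M ⊗ N` from the definition of the non-abelian tensor product
of Hom-Lie algebras. -/
def Dsub {K M N : Type} [Field K] [AddCommGroup M] [Module K M] [AddCommGroup N] [Module K N]
    (brM : M →ₗ[K] M →ₗ[K] M) (αM : M →ₗ[K] M)
    (brN : N →ₗ[K] N →ₗ[K] N) (αN : N →ₗ[K] N)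
    (actMN : M →ₗ[K] N →ₗ[K] N) (actNM : N →ₗ[K] M →ₗ[K] M) : Submodule K (M ⊗[K] N) :=
  Submodule.span K
    ({x | ∃ m m' n, x = brM m m' ⊗ₜ[K] αN n - αM m ⊗ₜ[K] actMN m' n + αM m' ⊗ₜ[K] actMN m n} ∪
     {x | ∃ m n n', x = αM m ⊗ₜ[K] brN n n' - actNM n' m ⊗ₜ[K] αN n + actNM n m ⊗ₜ[K] αN n'} ∪
     {x | ∃ m n, x = actNM n m ⊗ₜ[K] actMN m n} ∪
     {x | ∃ m m' n n', x = actNM n m ⊗ₜ[K] actMN m' n' + actNM n' m' ⊗ₜ[K] actMN m n} ∪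
     {x | ∃ m m' m'' n n' n'', x =
        brM (actNM n m) (actNM n' m') ⊗ₜ[K] αN (actMN m'' n'') +
        brM (actNM n' m') (actNM n'' m'') ⊗ₜ[K] αN (actMN m n) +
        brM (actNM n'' m'') (actNM n m) ⊗ₜ[K] αN (actMN m' n')})

/-- `T` is "the" Hom-Lie tensor product structure on the quotient `(M ⊗ N) ⧸ D` :
`D` is the subspace `D(M,N)`, the bracket is given on generators by
`[m⋆n, m'⋆n'] = -(ⁿm)⋆(^{m'}n')`, and the endomorphism is induced by `α_M ⊗ α_N`. -/
def IsStarStruct {K M N : Type} [Field K] [AddCommGroup M] [Module K M]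
    [AddCommGroup N] [Module K N] (HM : HomLieStr K M) (HN : HomLieStr K N)
    (aMN : HomAction HM HN) (aNM : HomAction HN HM)
    (D : Submodule K (M ⊗[K] N)) (T : HomLieStr K ((M ⊗[K] N) ⧸ D)) : Prop :=
  D = Dsub HM.br HM.α HN.br HN.α aMN.act aNM.act ∧
  (∀ m n m' n', T.br (D.mkQ (m ⊗ₜ[K] n)) (D.mkQ (m' ⊗ₜ[K] n')) =
      - D.mkQ (aNM.act n m ⊗ₜ[K] aMN.act m' n')) ∧
  (∀ m n, T.α (D.mkQ (m ⊗ₜ[K] n)) = D.mkQ (HM.α m ⊗ₜ[K] HN.α n))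

/-- `H` is an ideal of the Hom-Lie algebra `(L, HL)`. -/
def IsIdeal {K L : Type} [Field K] [AddCommGroup L] [Module K L]
    (HL : HomLieStr K L) (H : Submodule K L) : Prop :=
  (∀ x ∈ H, HL.α x ∈ H) ∧ (∀ x ∈ H, ∀ y : L, HL.br x y ∈ H)

namespace HomLieStr

variable {K L : Type} [Field K] [AddCommGroup L] [Module K L] (HL : HomLieStr K L)

theorem br_br_α (x y z : L) :
    HL.br (HL.br x y) (HL.α z) = HL.br (HL.br x z) (HL.α y) + HL.br (HL.α x) (HL.br y z) := by
  have jacobi := HL.jacobi z x y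
  rw [HL.skew (HL.α z), HL.skew (HL.α y), HL.skew z x, map_neg, LinearMap.neg_apply, neg_neg,
    add_assoc, neg_add_eq_zero] at jacobi
  exact jacobi

/-- The commutator `[H, I]` of two subspaces of a Hom-Lie algebra. It is encoded as their
image under the bilinear bracket, so that inclusions can be checked on brackets by
`Submodule.map₂_le`. -/
def commutator (H I : Submodule K L) : Submodule K L :=
  Submodule.map₂ HL.br H I

variable {HL} {H I : Submodule K L}

theorem commutator_eq_span :
    HL.commutator H I = Submodule.span K {z | ∃ h ∈ H, ∃ k ∈ I, z = HL.br h k} := by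
  simp only [commutator, Submodule.map₂_eq_span_image2, Set.image2, SetLike.mem_coe, eq_comm]

theorem br_mem_commutator {h k : L} (hh : h ∈ H) (hk : k ∈ I) :
    HL.br h k ∈ HL.commutator H I :=
  Submodule.apply_mem_map₂ HL.br hh hk

theorem α_mem_commutator (hH : ∀ h ∈ H, HL.α h ∈ H) (hI : ∀ k ∈ I, HL.α k ∈ I) {x : L}
    (hx : x ∈ HL.commutator H I) : HL.α x ∈ HL.commutator H I := by
  suffices HL.commutator H I ≤ (HL.commutator H I).comap HL.α from this hx
  refine Submodule.map₂_le.mpr fun h hh k hk => ?_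
  rw [Submodule.mem_comap, HL.αbr]
  exact br_mem_commutator (hH h hh) (hI k hk)

theorem br_α_mem_commutator (hH : IsIdeal HL H) (hI : IsIdeal HL I) {x : L}
    (hx : x ∈ HL.commutator H I) (y : L) : HL.br x (HL.α y) ∈ HL.commutator H I := by
  suffices HL.commutator H I ≤ (HL.commutator H I).comap (HL.br.flip (HL.α y)) from this hx
  refine Submodule.map₂_le.mpr fun h hh k hk => ?_
  rw [Submodule.mem_comap, LinearMap.flip_apply, HL.br_br_α]
  exact add_mem (br_mem_commutator (hH.2 h hh y) (hI.1 k hk))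
    (br_mem_commutator (hH.1 h hh) (hI.2 k hk y))

end HomLieStr

/-- If `α_L` is surjective and `H`, `I` are ideals of the Hom-Lie algebra
`(L, α_L)`, then the commutator `[H, I]`, i.e. the subspace spanned by all brackets `[h,k]`
with `h ∈ H`, `k ∈ I`, is an ideal of `(L, α_L)`. -/
theorem statement0 {K L : Type} [Field K] [AddCommGroup L] [Module K L]
    (HL : HomLieStr K L) (hsurj : Function.Surjective HL.α)
    (H I : Submodule K L) (hH : IsIdeal HL H) (hI : IsIdeal HL I) :
    IsIdeal HL (Submodule.span K {z | ∃ h ∈ H, ∃ k ∈ I, z = HL.br h k}) := by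
  rw [← HomLieStr.commutator_eq_span]
  refine ⟨fun x hx => HomLieStr.α_mem_commutator hH.1 hI.1 hx, fun x hx y => ?_⟩
  obtain ⟨y, rfl⟩ := hsurj y
  exact HomLieStr.br_α_mem_commutator hH hI hx y
end

section
/- Let (M, α_M) be a Hom-module over a Hom-Lie algebra (L, α_L). For every homomorphism of Hom-Lie algebras f : (K, α_K) → (L, α_L) and every derivation d : (K, α_K) → (M, α_M) (where (M, α_M) is regarded as a Hom-module over (K, α_K) via f, i.e. ᵏm = ^{f(k)}m), there exists a unique homomorphism of Hom-Lie algebras h : (K, α_K) → (M ⋊ L, α_⋊) such that π ∘ h = f and θ ∘ h = d, where π : M ⋊ L → L is the projection (m,l) ↦ l and θ : M ⋊ L → M is the projection (m,l) ↦ m. -/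
open TensorProduct

/-- A Hom-module `(M, αM)` over a Hom-Lie algebra `(L, HL)`: an abelian Hom-Lie algebra
equipped with a Hom-action of `(L, HL)` (the axiom involving the bracket of `M` is trivial). -/
structure HomModule {K L : Type} [Field K] [AddCommGroup L] [Module K L]
    (HL : HomLieStr K L) (M : Type) [AddCommGroup M] [Module K M] : Type where
  αM : M →ₗ[K] M
  act : L →ₗ[K] M →ₗ[K] M
  ax1 : ∀ x y m, act (HL.br x y) (αM m) = act (HL.α x) (act y m) - act (HL.α y) (act x m)
  ax3 : ∀ x m, αM (act x m) = act (HL.α x) (αM m)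

/-- `S` is the semi-direct product Hom-Lie structure `M ⋊ L` of a Hom-module `(M, αM, act)`
over `(L, HL)` : bracket `[(m₁,x₁),(m₂,x₂)] = (^{α_L(x₁)}m₂ − ^{α_L(x₂)}m₁, [x₁,x₂])`
(the summand `[m₁,m₂]` vanishes since `M` is abelian), endomorphism `(αM, α_L)`. -/
def IsSemidirect {K L M : Type} [Field K] [AddCommGroup L] [Module K L]
    [AddCommGroup M] [Module K M] (HL : HomLieStr K L) (Mod : HomModule HL M)
    (S : HomLieStr K (M × L)) : Prop :=
  (∀ m₁ x₁ m₂ x₂, S.br (m₁, x₁) (m₂, x₂) =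
      (Mod.act (HL.α x₁) m₂ - Mod.act (HL.α x₂) m₁, HL.br x₁ x₂)) ∧
  (∀ m x, S.α (m, x) = (Mod.αM m, HL.α x))

/-- `d` is a derivation from `(K₀, HK₀)` to the Hom-module `Mod` over `(L, HL)`, on which `K₀`
acts through the linear map `f : K₀ → L`. For `f` a homomorphism, `HL.α (f x) = f (HK₀.α x)`,
so this is the usual notion for `M` regarded as a Hom-module over `K₀`; stating it with
`HL.α (f x)` makes sense for every linear `f`. -/
def IsDerivationAlong {K L M K₀ : Type} [Field K] [AddCommGroup L] [Module K L]
    [AddCommGroup M] [Module K M] [AddCommGroup K₀] [Module K K₀] {HL : HomLieStr K L}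
    (HK₀ : HomLieStr K K₀) (Mod : HomModule HL M) (f : K₀ →ₗ[K] L) (d : K₀ →ₗ[K] M) : Prop :=
  (∀ x y, d (HK₀.br x y) = Mod.act (HL.α (f x)) (d y) - Mod.act (HL.α (f y)) (d x)) ∧
    (∀ x, d (HK₀.α x) = Mod.αM (d x))

theorem IsSemidirect.isHomLieHom_prod_iff {K L M K₀ : Type} [Field K] [AddCommGroup L]
    [Module K L] [AddCommGroup M] [Module K M] [AddCommGroup K₀] [Module K K₀]
    {HL : HomLieStr K L} {Mod : HomModule HL M} {S : HomLieStr K (M × L)}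
    (hS : IsSemidirect HL Mod S) {HK₀ : HomLieStr K K₀} {d : K₀ →ₗ[K] M} {f : K₀ →ₗ[K] L} :
    IsHomLieHom HK₀ S (d.prod f) ↔ IsDerivationAlong HK₀ Mod f d ∧ IsHomLieHom HK₀ HL f := by
  have map_br_iff (x y : K₀) :
      d.prod f (HK₀.br x y) = S.br (d.prod f x) (d.prod f y) ↔
        d (HK₀.br x y) = Mod.act (HL.α (f x)) (d y) - Mod.act (HL.α (f y)) (d x) ∧
          f (HK₀.br x y) = HL.br (f x) (f y) := by
    simp only [LinearMap.prod_apply, Function.prod_apply, hS.1, Prod.mk.injEq]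
  have map_α_iff (x : K₀) :
      d.prod f (HK₀.α x) = S.α (d.prod f x) ↔
        d (HK₀.α x) = Mod.αM (d x) ∧ f (HK₀.α x) = HL.α (f x) := by
    simp only [LinearMap.prod_apply, Function.prod_apply, hS.2, Prod.mk.injEq]
  simp only [IsHomLieHom, IsDerivationAlong, map_br_iff, map_α_iff, forall_and]
  exact and_and_and_comm

/-- Let `(M, α_M)` be a Hom-module over a Hom-Lie algebra `(L, α_L)`.
For every homomorphism of Hom-Lie algebras `f : (K₀, α_{K₀}) → (L, α_L)` and every
derivation `d : (K₀, α_{K₀}) → (M, α_M)` (with `M` a Hom-module over `K₀` via `f`),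
there is a unique homomorphism of Hom-Lie algebras `h : (K₀, α_{K₀}) → (M ⋊ L, α_⋊)`
with `π ∘ h = f` and `θ ∘ h = d`, where `π(m,l) = l` and `θ(m,l) = m`. -/
theorem statement1 {K L M K₀ : Type} [Field K] [AddCommGroup L] [Module K L]
    [AddCommGroup M] [Module K M] [AddCommGroup K₀] [Module K K₀]
    (HL : HomLieStr K L) (Mod : HomModule HL M)
    (S : HomLieStr K (M × L)) (hS : IsSemidirect HL Mod S)
    (HK₀ : HomLieStr K K₀) (f : K₀ →ₗ[K] L) (hf : IsHomLieHom HK₀ HL f)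
    (d : K₀ →ₗ[K] M)
    (hd1 : ∀ x y, d (HK₀.br x y) =
      Mod.act (HL.α (f x)) (d y) - Mod.act (HL.α (f y)) (d x))
    (hd2 : ∀ x, Mod.αM (d x) = d (HK₀.α x)) :
    ∃! h : K₀ →ₗ[K] M × L, IsHomLieHom HK₀ S h ∧
      (∀ k, (h k).2 = f k) ∧ (∀ k, (h k).1 = d k) := by
  have hd : IsDerivationAlong HK₀ Mod f d := ⟨hd1, fun x => (hd2 x).symm⟩
  refine ⟨d.prod f, ⟨hS.isHomLieHom_prod_iff.2 ⟨hd, hf⟩, fun _ => rfl, fun _ => rfl⟩, ?_⟩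
  rintro h ⟨-, h_snd, h_fst⟩
  exact LinearMap.ext fun k => Prod.ext (h_fst k) (h_snd k)
end

section
/- Let (M, α_M) and (N, α_N) be Hom-Lie algebras acting trivially on each other (ⁿm = 0 and ᵐn = 0 for all m, n), and suppose both α_M and α_N are surjective. Then there is an isomorphism of abelian Hom-Lie algebras (M⋆N, α_{M⋆N}) ≅ (M^{ab} ⊗ N^{ab}, α_{M^{ab}⊗N^{ab}}), where M^{ab} = M/[M,M], N^{ab} = N/[N,N] and α_{M^{ab}⊗N^{ab}} is induced by α_M and α_N. -/
open TensorProduct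

/-!
When the actions vanish, `D(M,N)` reduces to `[M,M] ⊗ α_N(N) + α_M(M) ⊗ [N,N]`. Surjectivity of
`α_M` and `α_N` turns this into `[M,M] ⊗ N + M ⊗ [N,N]`, which by right exactness of the tensor
product is the kernel of `M ⊗ N → M^{ab} ⊗ N^{ab}`.
-/

section BracketSpan

variable {R L : Type*} [CommSemiring R] [AddCommMonoid L] [Module R L]

/-- The subspace `[L,L]` spanned by all values of a bilinear bracket on `L`; the abelianization of
a Hom-Lie algebra is the quotient by it. -/
def bracketSpan (br : L →ₗ[R] L →ₗ[R] L) : Submodule R L :=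
  Submodule.span R {z | ∃ a b, z = br a b}

theorem apply_mem_bracketSpan (br : L →ₗ[R] L →ₗ[R] L) (x y : L) : br x y ∈ bracketSpan br :=
  Submodule.subset_span ⟨x, y, rfl⟩

end BracketSpan

section TrivialActions

variable {K M N : Type} [Field K] [AddCommGroup M] [Module K M] [AddCommGroup N] [Module K N]

theorem Dsub_zero_zero (brM : M →ₗ[K] M →ₗ[K] M) (αM : M →ₗ[K] M)
    (brN : N →ₗ[K] N →ₗ[K] N) (αN : N →ₗ[K] N) :
    Dsub brM αM brN αN 0 0 =
      Submodule.map₂ (TensorProduct.mk K M N) (bracketSpan brM) (LinearMap.range αN) ⊔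
        Submodule.map₂ (TensorProduct.mk K M N) (LinearMap.range αM) (bracketSpan brN) := by
  apply le_antisymm
  · refine Submodule.span_le.2 ?_
    rintro x ((((⟨m, m', n, rfl⟩ | ⟨m, n, n', rfl⟩) | ⟨m, n, rfl⟩) | ⟨m, m', n, n', rfl⟩) |
      ⟨m, m', m'', n, n', n'', rfl⟩)
    · simpa using Submodule.mem_sup_left (Submodule.apply_mem_map₂ (TensorProduct.mk K M N)
        (apply_mem_bracketSpan brM m m') (LinearMap.mem_range_self αN n))
    · simpa using Submodule.mem_sup_right (Submodule.apply_mem_map₂ (TensorProduct.mk K M N)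
        (LinearMap.mem_range_self αM m) (apply_mem_bracketSpan brN n n'))
    all_goals simp
  · rw [← Submodule.span_eq (LinearMap.range αN), ← Submodule.span_eq (LinearMap.range αM),
      bracketSpan, bracketSpan, Submodule.map₂_span_span, Submodule.map₂_span_span,
      ← Submodule.span_union, Submodule.span_le]
    rintro _ (⟨_, ⟨m, m', rfl⟩, _, ⟨n, rfl⟩, rfl⟩ | ⟨_, ⟨m, rfl⟩, _, ⟨n, n', rfl⟩, rfl⟩)
    · exact Submodule.subset_span (.inl (.inl (.inl (.inl ⟨m, m', n, by simp⟩))))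
    · exact Submodule.subset_span (.inl (.inl (.inl (.inr ⟨m, n, n', by simp⟩))))

theorem Dsub_zero_zero_of_surjective (brM : M →ₗ[K] M →ₗ[K] M) {αM : M →ₗ[K] M}
    (brN : N →ₗ[K] N →ₗ[K] N) {αN : N →ₗ[K] N}
    (hαM : Function.Surjective αM) (hαN : Function.Surjective αN) :
    Dsub brM αM brN αN 0 0 =
      LinearMap.range (TensorProduct.map (bracketSpan brM).subtype LinearMap.id) ⊔
        LinearMap.range (TensorProduct.map LinearMap.id (bracketSpan brN).subtype) := by
  rw [Dsub_zero_zero, LinearMap.range_eq_top.2 hαM, LinearMap.range_eq_top.2 hαN,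
    TensorProduct.range_map, TensorProduct.range_map, Submodule.range_subtype,
    Submodule.range_subtype, LinearMap.range_id, LinearMap.range_id]

theorem IsStarStruct.br_eq_zero {HM : HomLieStr K M} {HN : HomLieStr K N}
    {aMN : HomAction HM HN} {aNM : HomAction HN HM} {D : Submodule K (M ⊗[K] N)}
    {T : HomLieStr K ((M ⊗[K] N) ⧸ D)} (hT : IsStarStruct HM HN aMN aNM D T)
    (hNM : aNM.act = 0) : T.br = 0 := by
  obtain ⟨-, hbr, -⟩ := hT
  ext m n m' n'
  simpa [hNM] using hbr m n m' n'

end TrivialActions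

/-- Let `(M, α_M)` and `(N, α_N)` be Hom-Lie algebras acting trivially on
each other, with `α_M` and `α_N` surjective.  Then `(M⋆N, α_{M⋆N})` is abelian and there is
an isomorphism of abelian Hom-Lie algebras `(M⋆N, α_{M⋆N}) ≅ (M^{ab} ⊗ N^{ab}, α_{M^{ab}⊗N^{ab}})`,
carrying `m⋆n` to `m̄ ⊗ n̄` and intertwining `α_{M⋆N}` with the endomorphism induced by
`α_M` and `α_N`. -/
theorem statement6 {K M N : Type} [Field K] [AddCommGroup M] [Module K M]
    [AddCommGroup N] [Module K N] (HM : HomLieStr K M) (HN : HomLieStr K N)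
    (aMN : HomAction HM HN) (aNM : HomAction HN HM)
    (htrivMN : ∀ m n, aMN.act m n = 0) (htrivNM : ∀ n m, aNM.act n m = 0)
    (hsM : Function.Surjective HM.α) (hsN : Function.Surjective HN.α)
    (D : Submodule K (M ⊗[K] N)) (T : HomLieStr K ((M ⊗[K] N) ⧸ D))
    (hT : IsStarStruct HM HN aMN aNM D T)
    (Mc : Submodule K M) (hMc : Mc = Submodule.span K {z | ∃ a b, z = HM.br a b})
    (Nc : Submodule K N) (hNc : Nc = Submodule.span K {z | ∃ a b, z = HN.br a b}) :
    (∀ s t, T.br s t = 0) ∧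
    ∃ e : ((M ⊗[K] N) ⧸ D) ≃ₗ[K] ((M ⧸ Mc) ⊗[K] (N ⧸ Nc)),
      (∀ m n, e (D.mkQ (m ⊗ₜ[K] n)) = Mc.mkQ m ⊗ₜ[K] Nc.mkQ n) ∧
      (∀ m n, e (T.α (D.mkQ (m ⊗ₜ[K] n))) = Mc.mkQ (HM.α m) ⊗ₜ[K] Nc.mkQ (HN.α n)) := by
  have hMN : aMN.act = 0 := LinearMap.ext₂ htrivMN
  have hNM : aNM.act = 0 := LinearMap.ext₂ htrivNM
  refine ⟨fun s t ↦ by rw [hT.br_eq_zero hNM, LinearMap.zero_apply, LinearMap.zero_apply], ?_⟩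
  obtain ⟨hD, -, hα⟩ := hT
  rw [hMN, hNM, Dsub_zero_zero_of_surjective HM.br HN.br hsM hsN] at hD
  subst hMc hNc
  let e := Submodule.quotEquivOfEq _ _ hD ≪≫ₗ
    (TensorProduct.quotientTensorQuotientEquiv (bracketSpan HM.br) (bracketSpan HN.br)).symm
  have he (m : M) (n : N) : e (D.mkQ (m ⊗ₜ[K] n)) =
      (bracketSpan HM.br).mkQ m ⊗ₜ[K] (bracketSpan HN.br).mkQ n := rfl
  exact ⟨e, he, fun m n ↦ by rw [hα]; exact he (HM.α m) (HN.α n)⟩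
end

section
/- Let 0 → (M₁, α_{M₁}) →f (M₂, α_{M₂}) →g (M₃, α_{M₃}) → 0 be a short exact sequence of Hom-Lie algebras, and let (N, α_N) be a Hom-Lie algebra with compatible Hom-actions of (N, α_N) and each (M_i, α_{M_i}) (i = 1,2,3) on each other, such that f and g preserve these Hom-actions (f(ⁿm) = ⁿf(m), ^{m}n = ^{f(m)}n, and similarly for g). Then the induced sequence of Hom-Lie algebras (M₁⋆N, α_{M₁⋆N}) →^{f⋆id_N} (M₂⋆N, α_{M₂⋆N}) →^{g⋆id_N} (M₃⋆N, α_{M₃⋆N}) → 0 is exact: g⋆id_N is surjective and Ker(g⋆id_N) = Im(f⋆id_N). -/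
open TensorProduct

/-! `M ⋆ N` is the quotient of `M ⊗ N` by `D(M, N)`, and tensoring with `N` is right exact. A
surjection that preserves all the operations maps `D(M₂, N)` onto `D(M₃, N)`, because every
generator of the latter lifts to a generator of the same kind. Hence the preimage of `D(M₃, N)` in
`M₂ ⊗ N` is `D(M₂, N)` plus the image of `M₁ ⊗ N`, which is right exactness modulo the `D`'s. -/

section Quotient

variable {R A B C : Type*} [Ring R] [AddCommGroup A] [Module R A] [AddCommGroup B] [Module R B]
  [AddCommGroup C] [Module R C] {u : A →ₗ[R] B} {v : B →ₗ[R] C}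
  {P : Submodule R A} {Q : Submodule R B} {S : Submodule R C}
  {F : A ⧸ P →ₗ[R] B ⧸ Q} {G : B ⧸ Q →ₗ[R] C ⧸ S}

theorem surjective_of_comp_mkQ_eq (hv : Function.Surjective v)
    (hG : G ∘ₗ Q.mkQ = S.mkQ ∘ₗ v) : Function.Surjective G := by
  have hcomp : Function.Surjective (G ∘ₗ Q.mkQ) := by
    rw [hG]
    exact S.mkQ_surjective.comp hv
  exact .of_comp hcomp

theorem exact_of_comp_mkQ_eq (huv : Function.Exact u v) (hS : Q.map v = S)
    (hF : F ∘ₗ P.mkQ = Q.mkQ ∘ₗ u) (hG : G ∘ₗ Q.mkQ = S.mkQ ∘ₗ v) : Function.Exact F G := by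
  rw [LinearMap.exact_iff]
  apply Submodule.comap_injective_of_surjective Q.mkQ_surjective
  calc (LinearMap.ker G).comap Q.mkQ
    _ = S.comap v := by rw [← LinearMap.ker_comp, hG, LinearMap.ker_comp, Submodule.ker_mkQ]
    _ = Q ⊔ LinearMap.range u := by
      rw [← hS, Submodule.comap_map_eq, huv.linearMap_ker_eq]
    _ = (LinearMap.range (Q.mkQ ∘ₗ u)).comap Q.mkQ := by
      rw [LinearMap.range_comp, Submodule.comap_map_mkQ]
    _ = (LinearMap.range F).comap Q.mkQ := by
      rw [← hF, LinearMap.range_comp_of_range_eq_top F P.range_mkQ]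

end Quotient

theorem map_Dsub_eq_of_surjective {K M M' N N' : Type} [Field K]
    [AddCommGroup M] [Module K M] [AddCommGroup M'] [Module K M']
    [AddCommGroup N] [Module K N] [AddCommGroup N'] [Module K N']
    {brM : M →ₗ[K] M →ₗ[K] M} {αM : M →ₗ[K] M} {brM' : M' →ₗ[K] M' →ₗ[K] M'} {αM' : M' →ₗ[K] M'}
    {brN : N →ₗ[K] N →ₗ[K] N} {αN : N →ₗ[K] N} {brN' : N' →ₗ[K] N' →ₗ[K] N'} {αN' : N' →ₗ[K] N'}
    {actMN : M →ₗ[K] N →ₗ[K] N} {actNM : N →ₗ[K] M →ₗ[K] M}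
    {actMN' : M' →ₗ[K] N' →ₗ[K] N'} {actNM' : N' →ₗ[K] M' →ₗ[K] M'}
    {g : M →ₗ[K] M'} {h : N →ₗ[K] N'}
    (hg : Function.Surjective g) (hh : Function.Surjective h)
    (hg_br : ∀ x y, g (brM x y) = brM' (g x) (g y)) (hg_α : ∀ x, g (αM x) = αM' (g x))
    (hh_br : ∀ x y, h (brN x y) = brN' (h x) (h y)) (hh_α : ∀ x, h (αN x) = αN' (h x))
    (hg_act : ∀ n m, g (actNM n m) = actNM' (h n) (g m))
    (hh_act : ∀ m n, h (actMN m n) = actMN' (g m) (h n)) :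
    (Dsub brM αM brN αN actMN actNM).map (TensorProduct.map g h) =
      Dsub brM' αM' brN' αN' actMN' actNM' := by
  -- As unions of singletons indexed by tuples of elements, the generators of the right-hand side
  -- can be reindexed along the surjections `g` and `h`.
  simp only [Dsub, Submodule.map_span, Set.image_union, Set.ofPred_exists, Set.image_iUnion,
    Set.ofPred_eq_eq_singleton, Set.image_singleton]
  simp only [← hg.iUnion_comp, ← hh.iUnion_comp, map_add, map_sub, TensorProduct.map_tmul,
    hg_br, hg_α, hh_br, hh_α, hg_act, hh_act]

theorem statement7_general {K M₂ M₃ N : Type} {M₁ : Type*} [Field K]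
    [AddCommGroup M₁] [Module K M₁] [AddCommGroup M₂] [Module K M₂]
    [AddCommGroup M₃] [Module K M₃] [AddCommGroup N] [Module K N]
    {br₂ : M₂ →ₗ[K] M₂ →ₗ[K] M₂} {α₂ : M₂ →ₗ[K] M₂}
    {br₃ : M₃ →ₗ[K] M₃ →ₗ[K] M₃} {α₃ : M₃ →ₗ[K] M₃}
    {brN : N →ₗ[K] N →ₗ[K] N} {αN : N →ₗ[K] N}
    {act2N : M₂ →ₗ[K] N →ₗ[K] N} {actN2 : N →ₗ[K] M₂ →ₗ[K] M₂}
    {act3N : M₃ →ₗ[K] N →ₗ[K] N} {actN3 : N →ₗ[K] M₃ →ₗ[K] M₃}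
    {f : M₁ →ₗ[K] M₂} {g : M₂ →ₗ[K] M₃}
    (hgsurj : Function.Surjective g) (hexact : LinearMap.range f = LinearMap.ker g)
    (hg_br : ∀ x y, g (br₂ x y) = br₃ (g x) (g y)) (hg_α : ∀ x, g (α₂ x) = α₃ (g x))
    (hgN : ∀ n m, g (actN2 n m) = actN3 n (g m))
    (hgN' : ∀ m n, act2N m n = act3N (g m) n)
    {D₁ : Submodule K (M₁ ⊗[K] N)}
    {F : ((M₁ ⊗[K] N) ⧸ D₁) →ₗ[K] ((M₂ ⊗[K] N) ⧸ Dsub br₂ α₂ brN αN act2N actN2)}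
    (hF : ∀ m n, F (D₁.mkQ (m ⊗ₜ[K] n)) =
      (Dsub br₂ α₂ brN αN act2N actN2).mkQ (f m ⊗ₜ[K] n))
    {G : ((M₂ ⊗[K] N) ⧸ Dsub br₂ α₂ brN αN act2N actN2) →ₗ[K]
      ((M₃ ⊗[K] N) ⧸ Dsub br₃ α₃ brN αN act3N actN3)}
    (hG : ∀ m n, G ((Dsub br₂ α₂ brN αN act2N actN2).mkQ (m ⊗ₜ[K] n)) =
      (Dsub br₃ α₃ brN αN act3N actN3).mkQ (g m ⊗ₜ[K] n)) :
    Function.Surjective G ∧ LinearMap.ker G = LinearMap.range F := by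
  have hF_comp : F ∘ₗ D₁.mkQ = (Dsub br₂ α₂ brN αN act2N actN2).mkQ ∘ₗ f.rTensor N :=
    TensorProduct.ext' hF
  have hG_comp : G ∘ₗ (Dsub br₂ α₂ brN αN act2N actN2).mkQ =
      (Dsub br₃ α₃ brN αN act3N actN3).mkQ ∘ₗ g.rTensor N :=
    TensorProduct.ext' hG
  have hD : (Dsub br₂ α₂ brN αN act2N actN2).map (g.rTensor N) =
      Dsub br₃ α₃ brN αN act3N actN3 :=
    map_Dsub_eq_of_surjective hgsurj Function.surjective_id hg_br hg_α
      (fun _ _ ↦ rfl) (fun _ ↦ rfl) hgN hgN'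
  have hfg : Function.Exact (f.rTensor N) (g.rTensor N) :=
    rTensor_exact N (LinearMap.exact_iff.mpr hexact.symm) hgsurj
  exact ⟨surjective_of_comp_mkQ_eq (LinearMap.rTensor_surjective N hgsurj) hG_comp,
    (exact_of_comp_mkQ_eq hfg hD hF_comp hG_comp).linearMap_ker_eq⟩

/-- Given a short exact sequence `0 → M₁ →f M₂ →g M₃ → 0` of Hom-Lie
algebras and a Hom-Lie algebra `(N, α_N)` with compatible Hom-actions on and by each `Mᵢ`,
preserved by `f` and `g`, the induced sequence
`M₁⋆N → M₂⋆N → M₃⋆N → 0` of Hom-Lie tensor products is exact: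
`g⋆id_N` is surjective and `Ker(g⋆id_N) = Im(f⋆id_N)`. -/
theorem statement7 {K M₁ M₂ M₃ N : Type} [Field K]
    [AddCommGroup M₁] [Module K M₁] [AddCommGroup M₂] [Module K M₂]
    [AddCommGroup M₃] [Module K M₃] [AddCommGroup N] [Module K N]
    (H₁ : HomLieStr K M₁) (H₂ : HomLieStr K M₂) (H₃ : HomLieStr K M₃)
    (HN : HomLieStr K N)
    (a1N : HomAction H₁ HN) (aN1 : HomAction HN H₁)
    (a2N : HomAction H₂ HN) (aN2 : HomAction HN H₂)
    (a3N : HomAction H₃ HN) (aN3 : HomAction HN H₃)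
    (hc1 : Compatible a1N aN1) (hc2 : Compatible a2N aN2) (hc3 : Compatible a3N aN3)
    (f : M₁ →ₗ[K] M₂) (g : M₂ →ₗ[K] M₃)
    (hf : IsHomLieHom H₁ H₂ f) (hg : IsHomLieHom H₂ H₃ g)
    (hfinj : Function.Injective f) (hgsurj : Function.Surjective g)
    (hexact : LinearMap.range f = LinearMap.ker g)
    -- f and g preserve the Hom-actions
    (hfN : ∀ n m, f (aN1.act n m) = aN2.act n (f m))
    (hfN' : ∀ m n, a1N.act m n = a2N.act (f m) n)
    (hgN : ∀ n m, g (aN2.act n m) = aN3.act n (g m))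
    (hgN' : ∀ m n, a2N.act m n = a3N.act (g m) n)
    -- the functorial homomorphisms f⋆id_N and g⋆id_N
    (F : ((M₁ ⊗[K] N) ⧸ Dsub H₁.br H₁.α HN.br HN.α a1N.act aN1.act) →ₗ[K]
         ((M₂ ⊗[K] N) ⧸ Dsub H₂.br H₂.α HN.br HN.α a2N.act aN2.act))
    (hF : ∀ m n, F ((Dsub H₁.br H₁.α HN.br HN.α a1N.act aN1.act).mkQ (m ⊗ₜ[K] n)) =
        (Dsub H₂.br H₂.α HN.br HN.α a2N.act aN2.act).mkQ (f m ⊗ₜ[K] n))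
    (G : ((M₂ ⊗[K] N) ⧸ Dsub H₂.br H₂.α HN.br HN.α a2N.act aN2.act) →ₗ[K]
         ((M₃ ⊗[K] N) ⧸ Dsub H₃.br H₃.α HN.br HN.α a3N.act aN3.act))
    (hG : ∀ m n, G ((Dsub H₂.br H₂.α HN.br HN.α a2N.act aN2.act).mkQ (m ⊗ₜ[K] n)) =
        (Dsub H₃.br H₃.α HN.br HN.α a3N.act aN3.act).mkQ (g m ⊗ₜ[K] n)) :
    Function.Surjective G ∧ LinearMap.ker G = LinearMap.range F := by
  exact statement7_general hgsurj hexact hg.1 hg.2 hgN hgN' hF hG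
end

section
/- Let (M, α_M) and (N, α_N) be Hom-Lie algebras with compatible Hom-actions on each other. Then the formula ^{m'}(m⋆n) = [m',m] ⋆ α_N(n) + α_M(m) ⋆ (^{m'}n) defines a Hom-action of (M, α_M) on the Hom-Lie tensor product (M⋆N, α_{M⋆N}), and the formula ^{n'}(m⋆n) = (^{n'}m) ⋆ α_N(n) + α_M(m) ⋆ [n',n] defines a Hom-action of (N, α_N) on (M⋆N, α_{M⋆N}). -/
open TensorProduct

/-!
By relation (a), `[m', m] ⋆ α_N(n) + α_M(m) ⋆ (^{m'}n) = α_M(m') ⋆ (ᵐn)`, so the required operator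
is `m ⋆ n ↦ ᵐn` followed by `α_M(m') ⋆ -`. The map `(m, n) ↦ ᵐn` is itself a Hom-Lie pairing, and a
Hom-Lie pairing kills the generators of `D(M,N)`, except that a generator of type (c) goes to
`-[p, p]`, which need not vanish in characteristic two. This does no harm, as
`α_M(m') ⋆ [p, p] = 0` by relation (b). The action of `N` follows by symmetry, since
`(n, m) ↦ -(m ⋆ n)` is a Hom-Lie pairing of `N` and `M`.
-/

section Bilinear

theorem linearMap_ext_of_surjective_lift {R M N P Q : Type*} [CommSemiring R] [AddCommMonoid M]
    [Module R M] [AddCommMonoid N] [Module R N] [AddCommMonoid P] [Module R P] [AddCommMonoid Q]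
    [Module R Q] {f : M →ₗ[R] N →ₗ[R] P} (hsurj : Function.Surjective (TensorProduct.lift f))
    {φ ψ : P →ₗ[R] Q} (h : ∀ m n, φ (f m n) = ψ (f m n)) : φ = ψ :=
  (LinearMap.cancel_right hsurj).1 (TensorProduct.ext' fun m n => by simpa using h m n)

variable {R M N P : Type*} [CommRing R] [AddCommGroup M] [Module R M] [AddCommGroup N]
  [Module R N] [AddCommGroup P] [Module R P]

theorem surjective_lift_neg_flip {f : M →ₗ[R] N →ₗ[R] P}
    (hsurj : Function.Surjective (TensorProduct.lift f)) :
    Function.Surjective (TensorProduct.lift (-f.flip)) := by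
  have hlift : TensorProduct.lift (-f.flip) =
      -TensorProduct.lift f ∘ₗ (TensorProduct.comm R N M).toLinearMap :=
    TensorProduct.ext' fun n m => by simp
  rw [hlift]
  exact neg_surjective.comp (hsurj.comp (TensorProduct.comm R N M).surjective)

/-- The bilinear map `(m, n) ↦ m ⋆ n` into the quotient of `M ⊗ N` by `D`, defined for every `D`;
the Hom-Lie tensor product is the case `D = D(M,N)`. -/
def homLieStar (D : Submodule R (M ⊗[R] N)) : M →ₗ[R] N →ₗ[R] (M ⊗[R] N) ⧸ D :=
  (TensorProduct.mk R M N).compr₂ D.mkQ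

theorem homLieStar_apply (D : Submodule R (M ⊗[R] N)) (m : M) (n : N) :
    homLieStar D m n = D.mkQ (m ⊗ₜ[R] n) :=
  rfl

theorem surjective_lift_homLieStar (D : Submodule R (M ⊗[R] N)) :
    Function.Surjective (TensorProduct.lift (homLieStar D)) := by
  have hlift : TensorProduct.lift (homLieStar D) = D.mkQ :=
    TensorProduct.ext' fun m n => TensorProduct.lift.tmul m n
  rw [hlift]
  exact D.mkQ_surjective

end Bilinear

section HomLiePairing

variable {K M N P : Type} [Field K] [AddCommGroup M] [Module K M] [AddCommGroup N] [Module K N]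
  [AddCommGroup P] [Module K P] {HM : HomLieStr K M} {HN : HomLieStr K N}
  {aMN : HomAction HM HN} {aNM : HomAction HN HM} {HP : HomLieStr K P} {f : M →ₗ[K] N →ₗ[K] P}

theorem Compatible.symm (hcomp : Compatible aMN aNM) : Compatible aNM aMN :=
  And.symm hcomp

/-- A Hom-Lie pairing of `M` and `N`, acting on each other, into a Hom-Lie algebra `P`: a bilinear
map with the properties that `(m, n) ↦ m ⋆ n` has in the Hom-Lie tensor product. -/
structure IsHomLiePairing (aMN : HomAction HM HN) (aNM : HomAction HN HM) (HP : HomLieStr K P)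
    (f : M →ₗ[K] N →ₗ[K] P) : Prop where
  map_br_left : ∀ m m' n, f (HM.br m m') (HN.α n) =
    f (HM.α m) (aMN.act m' n) - f (HM.α m') (aMN.act m n)
  map_br_right : ∀ m n n', f (HM.α m) (HN.br n n') =
    f (aNM.act n' m) (HN.α n) - f (aNM.act n m) (HN.α n')
  map_act_act : ∀ m n m' n', f (aNM.act n m) (aMN.act m' n') = -HP.br (f m n) (f m' n')
  map_α : ∀ m n, f (HM.α m) (HN.α n) = HP.α (f m n)

theorem Compatible.isHomLiePairing_act (hcomp : Compatible aMN aNM) :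
    IsHomLiePairing aMN aNM HN aMN.act where
  map_br_left := aMN.ax1
  map_br_right m n n' := by
    rw [aMN.ax2, hcomp.2, hcomp.2, HN.skew (HN.α n') (aMN.act m n), sub_neg_eq_add, add_comm]
  map_act_act m n m' n' := by rw [hcomp.2, HN.skew]
  map_α m n := (aMN.ax3 m n).symm

namespace IsHomLiePairing

theorem neg_flip (hf : IsHomLiePairing aMN aNM HP f) : IsHomLiePairing aNM aMN HP (-f.flip) where
  map_br_left n n' m := by
    simp only [LinearMap.neg_apply, LinearMap.flip_apply, hf.map_br_right]
    abel
  map_br_right n m m' := by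
    simp only [LinearMap.neg_apply, LinearMap.flip_apply, hf.map_br_left]
    abel
  map_act_act n m n' m' := by
    simp only [LinearMap.neg_apply, LinearMap.flip_apply, hf.map_act_act, map_neg, neg_neg]
    exact HP.skew _ _
  map_α n m := by simp only [LinearMap.neg_apply, LinearMap.flip_apply, hf.map_α, map_neg]

theorem map_br_self_right (hf : IsHomLiePairing aMN aNM HP f) (m : M) (n : N) :
    f (HM.α m) (HN.br n n) = 0 := by
  rw [hf.map_br_right, sub_self]

theorem map_br_act_act (hf : IsHomLiePairing aMN aNM HP f) (hcomp : Compatible aMN aNM)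
    (m m' m'' : M) (n n' n'' : N) :
    f (HM.br (aNM.act n m) (aNM.act n' m')) (HN.α (aMN.act m'' n'')) =
      -HP.br (HP.α (f m'' n'')) (HP.br (f m n) (f m' n')) :=
  calc
    _ = f (aNM.act (aMN.act m' n') (aNM.act n m)) (aMN.act (HM.α m'') (HN.α n'')) := by
      rw [hcomp.1, aMN.ax3]
    _ = HP.br (HP.br (f m n) (f m' n')) (HP.α (f m'' n'')) := by
      rw [hf.map_act_act, hf.map_act_act, hf.map_α, map_neg, LinearMap.neg_apply, neg_neg]
    _ = _ := HP.skew _ _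

theorem Dsub_le_ker {Q : Type*} [AddCommGroup Q] [Module K Q]
    (hf : IsHomLiePairing aMN aNM HP f) (hcomp : Compatible aMN aNM)
    (g : P →ₗ[K] Q) (hg : ∀ p, g (HP.br p p) = 0) :
    Dsub HM.br HM.α HN.br HN.α aMN.act aNM.act ≤ LinearMap.ker (g ∘ₗ TensorProduct.lift f) := by
  refine Submodule.span_le.2 ?_
  rintro t ((((⟨m, m', n, rfl⟩ | ⟨m, n, n', rfl⟩) | ⟨m, n, rfl⟩) | ⟨m, m', n, n', rfl⟩) |
    ⟨m, m', m'', n, n', n'', rfl⟩) <;>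
  simp only [SetLike.mem_coe, LinearMap.mem_ker, LinearMap.comp_apply, map_add, map_sub,
    TensorProduct.lift.tmul]
  · rw [hf.map_br_left, map_sub]
    abel
  · rw [hf.map_br_right, map_sub]
    abel
  · rw [hf.map_act_act, map_neg, hg, neg_zero]
  · rw [hf.map_act_act, hf.map_act_act, HP.skew (f m' n'), map_neg, map_neg, map_neg, neg_neg,
      neg_add_cancel]
  · have jacobi := congrArg g (HP.jacobi (f m n) (f m' n') (f m'' n''))
    simp only [map_add, map_zero] at jacobi
    simp only [hf.map_br_act_act hcomp, map_neg]
    rw [← neg_eq_zero, ← jacobi]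
    abel

theorem exists_bilinear_lift {X Q : Type*} [AddCommGroup X] [Module K X] [AddCommGroup Q]
    [Module K Q] (hf : IsHomLiePairing aMN aNM HP f) (hcomp : Compatible aMN aNM)
    {D : Submodule K (M ⊗[K] N)} (hD : D ≤ Dsub HM.br HM.α HN.br HN.α aMN.act aNM.act)
    (B : X →ₗ[K] P →ₗ[K] Q) (hB : ∀ x p, B x (HP.br p p) = 0) :
    ∃ G : X →ₗ[K] ((M ⊗[K] N) ⧸ D) →ₗ[K] Q,
      ∀ x m n, G x (homLieStar D m n) = B x (f m n) := by
  have hker : D ≤ LinearMap.ker (B.flip ∘ₗ TensorProduct.lift f) :=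
    hD.trans (hf.Dsub_le_ker hcomp B.flip fun p => LinearMap.ext fun x => hB x p)
  exact ⟨(D.liftQ _ hker).flip, fun x m n => by simp [homLieStar_apply]⟩

theorem br_add_br_eq_neg_map (hf : IsHomLiePairing aMN aNM HP f) (hcomp : Compatible aMN aNM)
    (x m m' : M) (n n' : N) :
    HP.br (f (HM.α x) (aMN.act m n)) (HP.α (f m' n')) +
        HP.br (HP.α (f m n)) (f (HM.α x) (aMN.act m' n')) =
      -f (HM.α (HM.α x)) (aMN.act (aNM.act n m) (aMN.act m' n')) := by
  have hleft : HP.br (f (HM.α x) (aMN.act m n)) (HP.α (f m' n')) =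
      f (HM.α (aNM.act n m)) (aMN.act (HM.α x) (aMN.act m' n')) -
        f (HM.α (HM.α x)) (aMN.act (aNM.act n m) (aMN.act m' n')) := by
    rw [← hf.map_α, ← neg_inj, ← hf.map_act_act, hcomp.1, ← aMN.ax3, hf.map_br_left, neg_sub]
  have hright : HP.br (HP.α (f m n)) (f (HM.α x) (aMN.act m' n')) =
      -f (HM.α (aNM.act n m)) (aMN.act (HM.α x) (aMN.act m' n')) := by
    rw [← hf.map_α, aNM.ax3, hf.map_act_act, neg_neg]
  rw [hleft, hright]
  abel

theorem exists_homAction (hf : IsHomLiePairing aMN aNM HP f) (hcomp : Compatible aMN aNM)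
    (hsurj : Function.Surjective (TensorProduct.lift f)) (G : M →ₗ[K] P →ₗ[K] P)
    (hG : ∀ x m n, G x (f m n) = f (HM.α x) (aMN.act m n)) :
    ∃ a : HomAction HM HP, ∀ x m n,
      a.act x (f m n) = f (HM.br x m) (HN.α n) + f (HM.α m) (aMN.act x n) := by
  refine ⟨⟨G, fun x y p => ?_, fun x p p' => ?_, fun x p => ?_⟩, fun x m n => ?_⟩
  · suffices h : G (HM.br x y) ∘ₗ HP.α = G (HM.α x) ∘ₗ G y - G (HM.α y) ∘ₗ G x from
      LinearMap.congr_fun h p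
    refine linearMap_ext_of_surjective_lift hsurj fun m n => ?_
    simp only [LinearMap.comp_apply, LinearMap.sub_apply, ← hf.map_α, hG]
    rw [HM.αbr, ← aMN.ax3, hf.map_br_left]
  · suffices h : HP.br.compr₂ (G (HM.α x)) =
        HP.br.compl₁₂ (G x) HP.α + HP.br.compl₁₂ HP.α (G x) from LinearMap.congr_fun₂ h p p'
    refine linearMap_ext_of_surjective_lift hsurj fun m n => ?_
    refine linearMap_ext_of_surjective_lift hsurj fun m' n' => ?_
    simp only [LinearMap.compr₂_apply, LinearMap.add_apply, LinearMap.compl₁₂_apply, hG]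
    rw [hf.br_add_br_eq_neg_map hcomp, ← hG, hf.map_act_act, map_neg, neg_neg]
  · suffices h : HP.α ∘ₗ G x = G (HM.α x) ∘ₗ HP.α from LinearMap.congr_fun h p
    refine linearMap_ext_of_surjective_lift hsurj fun m n => ?_
    simp only [LinearMap.comp_apply, hG, ← hf.map_α, aMN.ax3]
  · change G x (f m n) = _
    rw [hG, hf.map_br_left, sub_add_cancel]

end IsHomLiePairing

theorem IsStarStruct.isHomLiePairing_homLieStar {D : Submodule K (M ⊗[K] N)}
    {T : HomLieStr K ((M ⊗[K] N) ⧸ D)} (hT : IsStarStruct HM HN aMN aNM D T) :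
    IsHomLiePairing aMN aNM T (homLieStar D) := by
  obtain ⟨hD, hbr, hα⟩ := hT
  have mkQ_eq_zero {t : M ⊗[K] N} (ht : t ∈ Dsub HM.br HM.α HN.br HN.α aMN.act aNM.act) :
      D.mkQ t = 0 := by
    rwa [← hD, ← D.ker_mkQ] at ht
  refine ⟨fun m m' n => ?_, fun m n n' => ?_, fun m n m' n' => ?_, fun m n => (hα m n).symm⟩
  · have h := mkQ_eq_zero (Submodule.subset_span (.inl (.inl (.inl (.inl ⟨m, m', n, rfl⟩)))))
    rw [map_add, map_sub, sub_add] at h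
    exact sub_eq_zero.1 h
  · have h := mkQ_eq_zero (Submodule.subset_span (.inl (.inl (.inl (.inr ⟨m, n, n', rfl⟩)))))
    rw [map_add, map_sub, sub_add] at h
    exact sub_eq_zero.1 h
  · rw [homLieStar_apply, homLieStar_apply, homLieStar_apply, hbr, neg_neg]

end HomLiePairing

/-- Let `(M, α_M)` and `(N, α_N)` be Hom-Lie algebras with compatible
Hom-actions on each other.  Then `^{m'}(m⋆n) = [m',m]⋆α_N(n) + α_M(m)⋆(^{m'}n)` defines a
Hom-action of `(M, α_M)` on the Hom-Lie tensor product `(M⋆N, α_{M⋆N})`, and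
`^{n'}(m⋆n) = (^{n'}m)⋆α_N(n) + α_M(m)⋆[n',n]` defines a Hom-action of `(N, α_N)` on
`(M⋆N, α_{M⋆N})`. -/
theorem statement10 {K M N : Type} [Field K] [AddCommGroup M] [Module K M]
    [AddCommGroup N] [Module K N] (HM : HomLieStr K M) (HN : HomLieStr K N)
    (aMN : HomAction HM HN) (aNM : HomAction HN HM)
    (hcomp : Compatible aMN aNM)
    (D : Submodule K (M ⊗[K] N)) (T : HomLieStr K ((M ⊗[K] N) ⧸ D))
    (hT : IsStarStruct HM HN aMN aNM D T) :
    (∃ aM : HomAction HM T, ∀ (m' m : M) (n : N),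
      aM.act m' (D.mkQ (m ⊗ₜ[K] n)) =
        D.mkQ (HM.br m' m ⊗ₜ[K] HN.α n) + D.mkQ (HM.α m ⊗ₜ[K] aMN.act m' n)) ∧
    (∃ aN : HomAction HN T, ∀ (n' : N) (m : M) (n : N),
      aN.act n' (D.mkQ (m ⊗ₜ[K] n)) =
        D.mkQ (aNM.act n' m ⊗ₜ[K] HN.α n) + D.mkQ (HM.α m ⊗ₜ[K] HN.br n' n)) := by
  have hstar := hT.isHomLiePairing_homLieStar
  have hsurj := surjective_lift_homLieStar D
  constructor
  · obtain ⟨G, hG⟩ := hcomp.isHomLiePairing_act.exists_bilinear_lift hcomp hT.1.le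
      (homLieStar D ∘ₗ HM.α) fun x n => hstar.map_br_self_right x n
    exact hstar.exists_homAction hcomp hsurj G hG
  · obtain ⟨G, hG⟩ := hcomp.symm.isHomLiePairing_act.neg_flip.exists_bilinear_lift hcomp hT.1.le
      (-(homLieStar D).flip ∘ₗ HN.α) fun x m => hstar.neg_flip.map_br_self_right x m
    obtain ⟨aN, haN⟩ := hstar.neg_flip.exists_homAction hcomp.symm
      (surjective_lift_neg_flip hsurj) G fun x n m => by
        simpa using hG x m n
    exact ⟨aN, fun n' m n => neg_injective <| by
      simpa [homLieStar_apply] using haN n' n m⟩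
end

section
/- Let (M, α_M) and (N, α_N) be Hom-Lie algebras with compatible Hom-actions on each other, and let ψ_M : M⋆N → M, m⋆n ↦ −(ⁿm), and ψ_N : M⋆N → N, m⋆n ↦ ᵐn, be the induced homomorphisms. Then Ker(ψ_M) and Ker(ψ_N) are contained in the center Z(M⋆N) = { t ∈ M⋆N : [t, s] = 0 for all s ∈ M⋆N } of the Hom-Lie tensor product (M⋆N, α_{M⋆N}). -/
open TensorProduct

section StarBracket

variable {R M N : Type*} [CommRing R] [AddCommGroup M] [Module R M] [AddCommGroup N] [Module R N]
  {actMN : M →ₗ[R] N →ₗ[R] N} {actNM : N →ₗ[R] M →ₗ[R] M} {D : Submodule R (M ⊗[R] N)}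
  {br : ((M ⊗[R] N) ⧸ D) →ₗ[R] ((M ⊗[R] N) ⧸ D) →ₗ[R] ((M ⊗[R] N) ⧸ D)}
  {ψM : ((M ⊗[R] N) ⧸ D) →ₗ[R] M} {ψN : ((M ⊗[R] N) ⧸ D) →ₗ[R] N}

theorem starBracket_apply_eq_mkQ_tmul
    (hbr : ∀ m n m' n', br (D.mkQ (m ⊗ₜ[R] n)) (D.mkQ (m' ⊗ₜ[R] n')) =
      -D.mkQ (actNM n m ⊗ₜ[R] actMN m' n'))
    (hψM : ∀ m n, ψM (D.mkQ (m ⊗ₜ[R] n)) = -actNM n m)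
    (hψN : ∀ m n, ψN (D.mkQ (m ⊗ₜ[R] n)) = actMN m n) (t s : (M ⊗[R] N) ⧸ D) :
    br t s = D.mkQ (ψM t ⊗ₜ[R] ψN s) := by
  suffices h : br = ((TensorProduct.mk R M N).compr₂ D.mkQ).compl₁₂ ψM ψN from
    LinearMap.congr_fun₂ h t s
  ext m n m' n'
  calc br (D.mkQ (m ⊗ₜ[R] n)) (D.mkQ (m' ⊗ₜ[R] n'))
      = -D.mkQ (actNM n m ⊗ₜ[R] actMN m' n') := hbr m n m' n'
    _ = D.mkQ ((-actNM n m) ⊗ₜ[R] actMN m' n') := by rw [neg_tmul, map_neg]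
    _ = D.mkQ (ψM (D.mkQ (m ⊗ₜ[R] n)) ⊗ₜ[R] ψN (D.mkQ (m' ⊗ₜ[R] n'))) := by rw [hψM, hψN]

theorem statement11_general (hskew : ∀ t s, br t s = -br s t)
    (hbr : ∀ m n m' n', br (D.mkQ (m ⊗ₜ[R] n)) (D.mkQ (m' ⊗ₜ[R] n')) =
      -D.mkQ (actNM n m ⊗ₜ[R] actMN m' n'))
    (hψM : ∀ m n, ψM (D.mkQ (m ⊗ₜ[R] n)) = -actNM n m)
    (hψN : ∀ m n, ψN (D.mkQ (m ⊗ₜ[R] n)) = actMN m n) :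
    (∀ t, ψM t = 0 → ∀ s, br t s = 0) ∧ (∀ t, ψN t = 0 → ∀ s, br t s = 0) := by
  have bracket_eq := starBracket_apply_eq_mkQ_tmul hbr hψM hψN
  constructor
  · intro t ht s
    rw [bracket_eq, ht, zero_tmul, map_zero]
  · intro t ht s
    rw [hskew, bracket_eq, ht, tmul_zero, map_zero, neg_zero]

end StarBracket

/-- Let `(M, α_M)` and `(N, α_N)` be Hom-Lie algebras with compatible
Hom-actions on each other, and let `ψ_M : M⋆N → M`, `m⋆n ↦ −(ⁿm)`, and
`ψ_N : M⋆N → N`, `m⋆n ↦ ᵐn`, be the induced homomorphisms.  Then `Ker(ψ_M)` and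
`Ker(ψ_N)` are contained in the center of `(M⋆N, α_{M⋆N})`. -/
theorem statement11 {K M N : Type} [Field K] [AddCommGroup M] [Module K M]
    [AddCommGroup N] [Module K N] (HM : HomLieStr K M) (HN : HomLieStr K N)
    (aMN : HomAction HM HN) (aNM : HomAction HN HM)
    (hcomp : Compatible aMN aNM)
    (D : Submodule K (M ⊗[K] N)) (T : HomLieStr K ((M ⊗[K] N) ⧸ D))
    (hT : IsStarStruct HM HN aMN aNM D T)
    (ψM : ((M ⊗[K] N) ⧸ D) →ₗ[K] M)
    (hψM : ∀ m n, ψM (D.mkQ (m ⊗ₜ[K] n)) = - aNM.act n m)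
    (ψN : ((M ⊗[K] N) ⧸ D) →ₗ[K] N)
    (hψN : ∀ m n, ψN (D.mkQ (m ⊗ₜ[K] n)) = aMN.act m n) :
    (∀ t, ψM t = 0 → ∀ s, T.br t s = 0) ∧
    (∀ t, ψN t = 0 → ∀ s, T.br t s = 0) :=
  statement11_general T.skew hT.2.1 hψM hψN
end

section
/- Let (M, α_M) be an ideal of a perfect Hom-Lie algebra (L, α_L) (i.e. L = [L,L]), with M and L acting on each other via the bracket of L. Then there is an exact sequence of vector spaces Ker(ψ_M : M⋆L → M) → H₂^α(L) → H₂^α(L/M) → M/[L,M] → 0, where ψ_M(m⋆l) = −(ˡm) = [m,l], the first two maps are induced by the inclusion M ↪ L and the projection L → L/M respectively, and the last map sends the class of a 2-cycle to the corresponding class in M/[L,M]. -/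
open TensorProduct

/-- The wedge `v₀ ∧ … ∧ v_{n-1}` as an element of the `n`-th exterior power `⋀[K]^n L`. -/
def wedge {K L : Type} [Field K] [AddCommGroup L] [Module K L] (n : ℕ) (v : Fin n → L) :
    ↥(⋀[K]^n L) :=
  ⟨ExteriorAlgebra.ιMulti K n v, ExteriorAlgebra.ιMulti_range K n ⟨v, rfl⟩⟩

/-!
The sequence is the snake lemma for the map of exact rows

    M⋆L  →  Λ²L / Im d₃  →  Λ²(L/M) / Im d₃  →  0
     ↓           ↓                 ↓
0  →  M   →      L       →        L/M

with verticals `ψ_M` and the two maps induced by `d₂`: the kernels of the last two are the second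
homology groups, the cokernel of `ψ_M` is `M/[L,M]`, and the middle cokernel vanishes because `L`
is perfect. Since `d₂(x∧y) = -[x,y]` while `ψ_M(m⋆l) = [m,l]`, the inclusion `M → L` has to be
taken with a minus sign for the left square to commute.
-/

section Snake

open LinearMap
open Function hiding comp_apply

variable {R M₁ M₂ M₃ N₁ N₂ N₃ C₁ : Type*} [CommRing R]
  [AddCommGroup M₁] [Module R M₁] [AddCommGroup M₂] [Module R M₂] [AddCommGroup M₃] [Module R M₃]
  [AddCommGroup N₁] [Module R N₁] [AddCommGroup N₂] [Module R N₂] [AddCommGroup N₃] [Module R N₃]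
  [AddCommGroup C₁] [Module R C₁]
  {i₁ : M₁ →ₗ[R] N₁} {i₂ : M₂ →ₗ[R] N₂} {i₃ : M₃ →ₗ[R] N₃}
  {f₁ : M₁ →ₗ[R] M₂} {f₂ : M₂ →ₗ[R] M₃} {g₁ : N₁ →ₗ[R] N₂} {g₂ : N₂ →ₗ[R] N₃}
  {F₁ : ker i₁ →ₗ[R] ker i₂} {F₂ : ker i₂ →ₗ[R] ker i₃} {π₁ : N₁ →ₗ[R] C₁} {δ : ker i₃ →ₗ[R] C₁}

theorem exact_ker_of_exact (hf : Exact f₁ f₂) (hg₁ : Injective g₁) (h₁ : g₁ ∘ₗ i₁ = i₂ ∘ₗ f₁)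
    (hF₁ : ∀ x, (F₁ x : M₂) = f₁ x) (hF₂ : ∀ y, (F₂ y : M₃) = f₂ y) : Exact F₁ F₂ := by
  intro y
  constructor
  · intro hy
    obtain ⟨x, hx⟩ := (hf y).1 (by rw [← hF₂, hy, Submodule.coe_zero])
    have hx_ker : i₁ x = 0 := hg₁ <| by
      rw [← comp_apply, h₁, comp_apply, hx, y.2, map_zero]
    exact ⟨⟨x, hx_ker⟩, Subtype.ext <| by rw [hF₁, hx]⟩
  · rintro ⟨x, rfl⟩
    exact Subtype.ext <| by rw [hF₂, hF₁, hf.apply_apply_eq_zero, Submodule.coe_zero]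

theorem eq_snakeLemma_δ' (hf : Exact f₁ f₂) (hf₂ : Surjective f₂) (hg : Exact g₁ g₂)
    (hg₁ : Injective g₁) (h₁ : g₁ ∘ₗ i₁ = i₂ ∘ₗ f₁) (h₂ : g₂ ∘ₗ i₂ = i₃ ∘ₗ f₂)
    (hπ₁ : Exact i₁ π₁) (hδ : ∀ (k : ker i₃) y z, f₂ y = k → g₁ z = i₂ y → δ k = π₁ z) :
    δ = SnakeLemma.δ' i₁ i₂ i₃ f₁ f₂ hf g₁ g₂ hg h₁ h₂ (ker i₃).subtype
      i₃.exact_subtype_ker_map π₁ hπ₁ hf₂ hg₁ := by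
  ext k
  obtain ⟨y, hy⟩ := hf₂ k
  obtain ⟨z, hz⟩ := (hg (i₂ y)).1 (by rw [← comp_apply, h₂, comp_apply, hy, k.2])
  rw [hδ k y z hy hz, SnakeLemma.δ'_eq (hy := hy) (hz := hz)]

theorem exact_ker_connecting (hf : Exact f₁ f₂) (hf₂ : Surjective f₂) (hg : Exact g₁ g₂)
    (hg₁ : Injective g₁) (h₁ : g₁ ∘ₗ i₁ = i₂ ∘ₗ f₁) (h₂ : g₂ ∘ₗ i₂ = i₃ ∘ₗ f₂)
    (hπ₁ : Exact i₁ π₁) (hF₂ : ∀ y, (F₂ y : M₃) = f₂ y)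
    (hδ : ∀ (k : ker i₃) y z, f₂ y = k → g₁ z = i₂ y → δ k = π₁ z) : Exact F₂ δ := by
  rw [eq_snakeLemma_δ' hf hf₂ hg hg₁ h₁ h₂ hπ₁ hδ]
  apply SnakeLemma.exact_δ'_right (hι₂ := i₂.exact_subtype_ker_map)
    (hF := LinearMap.ext fun y => (hF₂ y).symm) (h := (ker i₃).injective_subtype)

theorem surjective_connecting (hf : Exact f₁ f₂) (hf₂ : Surjective f₂) (hg : Exact g₁ g₂)
    (hg₁ : Injective g₁) (h₁ : g₁ ∘ₗ i₁ = i₂ ∘ₗ f₁) (h₂ : g₂ ∘ₗ i₂ = i₃ ∘ₗ f₂)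
    (hπ₁ : Exact i₁ π₁) (hπ₁_surj : Surjective π₁) (hi₂ : Surjective i₂)
    (hδ : ∀ (k : ker i₃) y z, f₂ y = k → g₁ z = i₂ y → δ k = π₁ z) : Surjective δ := by
  rw [eq_snakeLemma_δ' hf hf₂ hg hg₁ h₁ h₂ hπ₁ hδ, ← exact_zero_iff_surjective PUnit]
  apply SnakeLemma.exact_δ'_left (hπ₂ := (exact_zero_iff_surjective PUnit i₂).2 hi₂)
    (hF := show 0 ∘ₗ π₁ = 0 ∘ₗ g₁ from rfl) (h := hπ₁_surj)

end Snake

section Quotient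

open LinearMap

variable {R A B C D : Type*} [Ring R] [AddCommGroup A] [Module R A] [AddCommGroup B] [Module R B]
  [AddCommGroup C] [Module R C] [AddCommGroup D] [Module R D]
  {p : Submodule R A} {q : Submodule R B}
  {g : A →ₗ[R] B} {c : A ⧸ p →ₗ[R] C} {d : B ⧸ q →ₗ[R] D}

theorem surjective_mapQ (hpq : p ≤ q.comap g) (hg : Function.Surjective g) :
    Function.Surjective (p.mapQ q g hpq) :=
  .of_comp (g := p.mkQ) <| q.mkQ_surjective.comp hg

theorem coe_apply_of_apply_mkQ {u : C →ₗ[R] D} {hpq : p ≤ q.comap g}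
    (hsq : u ∘ₗ c = d ∘ₗ p.mapQ q g hpq) {f : ker c →ₗ[R] ker d}
    (hf : ∀ a (ha : p.mkQ a ∈ ker c) (hb : q.mkQ (g a) ∈ ker d),
      f ⟨p.mkQ a, ha⟩ = ⟨q.mkQ (g a), hb⟩)
    (x : ker c) : (f x : B ⧸ q) = p.mapQ q g hpq x := by
  obtain ⟨x, hx⟩ := x
  obtain ⟨a, rfl⟩ := p.mkQ_surjective x
  have hb : q.mkQ (g a) ∈ ker d :=
    calc d (p.mapQ q g hpq (p.mkQ a)) = u (c (p.mkQ a)) := (congr($hsq (p.mkQ a))).symm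
      _ = 0 := by rw [hx, map_zero]
  exact congrArg Subtype.val (hf a hx hb)

theorem connecting_apply_of_apply_mkQ {P : Submodule R C} {N : Submodule R P}
    {c₀ : A →ₗ[R] C} (hc : ∀ a, c (p.mkQ a) = c₀ a) (hpq : p ≤ q.comap g)
    {δ : ker d →ₗ[R] P ⧸ N} (hδ : ∀ a (ha : q.mkQ (g a) ∈ ker d) (ha' : -c₀ a ∈ P),
      δ ⟨q.mkQ (g a), ha⟩ = Submodule.Quotient.mk ⟨-c₀ a, ha'⟩)
    (k : ker d) (y : A ⧸ p) (z : P) (hy : p.mapQ q g hpq y = k) (hz : (-P.subtype) z = c y) :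
    δ k = N.mkQ z := by
  obtain ⟨a, rfl⟩ := p.mkQ_surjective y
  have hza : -c₀ a = z := by rw [← hc, ← hz, LinearMap.neg_apply, P.subtype_apply, neg_neg]
  calc δ k = δ ⟨q.mkQ (g a), hy ▸ k.2⟩ := congrArg δ (Subtype.ext hy.symm)
    _ = N.mkQ ⟨-c₀ a, hza ▸ z.2⟩ := hδ a _ _
    _ = N.mkQ z := congrArg N.mkQ (Subtype.ext hza)

end Quotient

section Alternating

variable {R M N : Type*} [CommRing R] [AddCommGroup M] [Module R M] [AddCommGroup N] [Module R N]

theorem alternating_pair_swap (φ : M [⋀^Fin 2]→ₗ[R] N) (x y : M) : φ ![x, y] = -φ ![y, x] := by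
  have hswap : ![y, x] ∘ Equiv.swap (0 : Fin 2) 1 = ![x, y] := by
    funext i; fin_cases i <;> rfl
  rw [← hswap, φ.map_swap _ zero_ne_one]

theorem alternating_pair_neg_left (φ : M [⋀^Fin 2]→ₗ[R] N) (x y : M) :
    φ ![-x, y] = -φ ![x, y] :=
  congr($(φ.curryLeft.map_neg x) ![y])

theorem alternating_pair_sub_left (φ : M [⋀^Fin 2]→ₗ[R] N) (x y z : M) :
    φ ![x - y, z] = φ ![x, z] - φ ![y, z] :=
  congr($(φ.curryLeft.map_sub x y) ![z])

theorem alternating_pair_sub (φ : M [⋀^Fin 2]→ₗ[R] N) (x y x' y' : M) :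
    φ ![x, y] - φ ![x', y'] = φ ![x - x', y] - φ ![y - y', x'] := by
  rw [alternating_pair_sub_left, alternating_pair_sub_left, alternating_pair_swap φ x' y',
    alternating_pair_swap φ x' y]
  abel

theorem exteriorPower_two_hom_ext {f f' : ⋀[R]^2 M →ₗ[R] N}
    (h : ∀ x y, f (exteriorPower.ιMulti R 2 ![x, y]) = f' (exteriorPower.ιMulti R 2 ![x, y])) :
    f = f' := by
  ext v
  rw [show v = ![v 0, v 1] from List.ofFn_inj.1 rfl]
  exact h _ _

theorem exteriorPower_three_hom_ext {f f' : ⋀[R]^3 M →ₗ[R] N}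
    (h : ∀ x y z, f (exteriorPower.ιMulti R 3 ![x, y, z]) =
      f' (exteriorPower.ιMulti R 3 ![x, y, z])) : f = f' := by
  ext v
  rw [show v = ![v 0, v 1, v 2] from List.ofFn_inj.1 rfl]
  exact h _ _ _

theorem exteriorPower_map_two_ιMulti (π : M →ₗ[R] N) (x y : M) :
    exteriorPower.map 2 π (exteriorPower.ιMulti R 2 ![x, y]) =
      exteriorPower.ιMulti R 2 ![π x, π y] := by
  rw [exteriorPower.map_apply_ιMulti, show π ∘ ![x, y] = ![π x, π y] from List.ofFn_inj.1 rfl]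

theorem exteriorPower_map_three_ιMulti (π : M →ₗ[R] N) (x y z : M) :
    exteriorPower.map 3 π (exteriorPower.ιMulti R 3 ![x, y, z]) =
      exteriorPower.ιMulti R 3 ![π x, π y, π z] := by
  rw [exteriorPower.map_apply_ιMulti,
    show π ∘ ![x, y, z] = ![π x, π y, π z] from List.ofFn_inj.1 rfl]

theorem exact_exteriorPower_map_two {A : Type*} [AddCommGroup A] [Module R A]
    {f : A →ₗ[R] M} {π : M →ₗ[R] N} (hfπ : Function.Exact f π)
    {σ : N →ₗ[R] M} (hσ : π ∘ₗ σ = LinearMap.id) {g : A ⊗[R] M →ₗ[R] ⋀[R]^2 M}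
    (hg : ∀ a x, g (a ⊗ₜ x) = exteriorPower.ιMulti R 2 ![f a, x]) :
    Function.Exact g (exteriorPower.map 2 π) := by
  refine LinearMap.exact_of_comp_of_mem_range (TensorProduct.ext' fun a x => ?_) fun z hz => ?_
  · rw [LinearMap.comp_apply, hg, exteriorPower_map_two_ιMulti, hfπ.apply_apply_eq_zero]
    exact AlternatingMap.map_coord_zero _ 0 rfl
  · -- Applying `e` fixes wedges modulo `range g`, so the quotient map factors through `Λ²π`.
    let e : M →ₗ[R] M := σ ∘ₗ π
    have hmem (x y : M) : exteriorPower.ιMulti R 2 ![x - e x, y] ∈ LinearMap.range g := by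
      obtain ⟨a, ha⟩ : x - e x ∈ Set.range f := (hfπ _).1 <| by
        rw [map_sub, sub_eq_zero]
        exact congr($hσ.symm (π x))
      exact ⟨a ⊗ₜ y, by rw [hg, ha]⟩
    have hsplit : (LinearMap.range g).mkQ = (LinearMap.range g).mkQ ∘ₗ exteriorPower.map 2 e := by
      refine exteriorPower_two_hom_ext fun x y => ?_
      rw [LinearMap.comp_apply, exteriorPower_map_two_ιMulti, ← sub_eq_zero, ← map_sub,
        alternating_pair_sub, Submodule.mkQ_apply, Submodule.Quotient.mk_eq_zero]
      exact sub_mem (hmem _ _) (hmem _ _)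
    rw [← Submodule.Quotient.mk_eq_zero, ← Submodule.mkQ_apply, hsplit, exteriorPower.map_comp,
      LinearMap.comp_apply, LinearMap.comp_apply, hz, map_zero, map_zero]

end Alternating

section HomLie

variable {K L L' M : Type} [Field K] [AddCommGroup L] [Module K L] [AddCommGroup L'] [Module K L']
  [AddCommGroup M] [Module K M]

theorem wedge_eq_ιMulti (n : ℕ) (v : Fin n → L) : wedge n v = exteriorPower.ιMulti K n v :=
  rfl

/-- `H.IsBoundary₂ d` says that `d : Λ²L → L` is the differential `d₂` of the
Hom-Chevalley-Eilenberg complex of `L`, given by its values on decomposable elements. -/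
def HomLieStr.IsBoundary₂ (H : HomLieStr K L) (d : ⋀[K]^2 L →ₗ[K] L) : Prop :=
  ∀ x y, d (wedge 2 ![x, y]) = -H.br x y

/-- `H.IsBoundary₃ d` says that `d : Λ³L → Λ²L` is the differential `d₃` of the
Hom-Chevalley-Eilenberg complex of `L`, given by its values on decomposable elements. -/
def HomLieStr.IsBoundary₃ (H : HomLieStr K L) (d : ⋀[K]^3 L →ₗ[K] ⋀[K]^2 L) : Prop :=
  ∀ x y z, d (wedge 3 ![x, y, z]) =
    -wedge 2 ![H.br x y, H.α z] + wedge 2 ![H.br x z, H.α y] - wedge 2 ![H.br y z, H.α x]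

variable {H : HomLieStr K L} {H' : HomLieStr K L'} {f : L →ₗ[K] L'}
  {d₂ : ⋀[K]^2 L →ₗ[K] L} {d₃ : ⋀[K]^3 L →ₗ[K] ⋀[K]^2 L}
  {d₂' : ⋀[K]^2 L' →ₗ[K] L'} {d₃' : ⋀[K]^3 L' →ₗ[K] ⋀[K]^2 L'}

theorem IsHomLieHom.comp_boundary₂ (hf : IsHomLieHom H H' f) (hd₂ : H.IsBoundary₂ d₂)
    (hd₂' : H'.IsBoundary₂ d₂') : f ∘ₗ d₂ = d₂' ∘ₗ exteriorPower.map 2 f := by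
  refine exteriorPower_two_hom_ext fun x y => ?_
  rw [LinearMap.comp_apply, LinearMap.comp_apply, exteriorPower_map_two_ιMulti,
    ← wedge_eq_ιMulti, ← wedge_eq_ιMulti, hd₂, hd₂', map_neg, hf.1]

theorem IsHomLieHom.comp_boundary₃ (hf : IsHomLieHom H H' f) (hd₃ : H.IsBoundary₃ d₃)
    (hd₃' : H'.IsBoundary₃ d₃') :
    exteriorPower.map 2 f ∘ₗ d₃ = d₃' ∘ₗ exteriorPower.map 3 f := by
  refine exteriorPower_three_hom_ext fun x y z => ?_
  rw [LinearMap.comp_apply, LinearMap.comp_apply, exteriorPower_map_three_ιMulti,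
    ← wedge_eq_ιMulti, ← wedge_eq_ιMulti, hd₃, hd₃']
  simp only [map_add, map_sub, map_neg, wedge_eq_ιMulti, exteriorPower_map_two_ιMulti, hf.1, hf.2]

theorem IsHomLieHom.map_range_boundary₃ (hf : IsHomLieHom H H' f) (hf_surj : Function.Surjective f)
    (hd₃ : H.IsBoundary₃ d₃) (hd₃' : H'.IsBoundary₃ d₃') :
    (LinearMap.range d₃).map (exteriorPower.map 2 f) = LinearMap.range d₃' := by
  rw [← LinearMap.range_comp, hf.comp_boundary₃ hd₃ hd₃', LinearMap.range_comp_of_range_eq_top]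
  exact LinearMap.range_eq_top.2 (exteriorPower.map_surjective hf_surj)

theorem HomLieStr.IsBoundary₂.range_eq_span (hd₂ : H.IsBoundary₂ d₂) :
    LinearMap.range d₂ = Submodule.span K {z | ∃ x y, z = H.br x y} := by
  have hrange : d₂ '' Set.range (exteriorPower.ιMulti K 2) = {z | ∃ x y, z = H.br x y} := by
    ext z
    constructor
    · rintro ⟨_, ⟨v, rfl⟩, rfl⟩
      refine ⟨v 1, v 0, ?_⟩
      rw [show v = ![v 0, v 1] from List.ofFn_inj.1 rfl, ← wedge_eq_ιMulti, hd₂, ← H.skew]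
      rfl
    · rintro ⟨x, y, rfl⟩
      exact ⟨_, ⟨![y, x], rfl⟩, (hd₂ y x).trans (H.skew x y).symm⟩
  rw [← hrange, ← Submodule.map_span, exteriorPower.ιMulti_span, Submodule.map_top]

theorem HomLieStr.IsBoundary₂.surjective_of_perfect (hd₂ : H.IsBoundary₂ d₂)
    (hperf : Submodule.span K {z | ∃ x y, z = H.br x y} = ⊤) {E : Submodule K (⋀[K]^2 L)}
    {d : (⋀[K]^2 L ⧸ E) →ₗ[K] L} (hd : ∀ z, d (E.mkQ z) = d₂ z) : Function.Surjective d := by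
  intro x
  obtain ⟨z, rfl⟩ := LinearMap.range_eq_top.1 (hd₂.range_eq_span.trans hperf) x
  exact ⟨E.mkQ z, hd z⟩

theorem Dsub_le_comap_range_boundary₃ {HM : HomLieStr K M} {i : M →ₗ[K] L}
    (hi : IsHomLieHom HM H i) {actML : M →ₗ[K] L →ₗ[K] L} (hML : ∀ m l, actML m l = H.br (i m) l)
    {actLM : L →ₗ[K] M →ₗ[K] M} (hLM : ∀ l m, i (actLM l m) = H.br l (i m))
    (hd₃ : H.IsBoundary₃ d₃) {g : M ⊗[K] L →ₗ[K] ⋀[K]^2 L}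
    (hg : ∀ m l, g (m ⊗ₜ l) = wedge 2 ![i m, l]) :
    Dsub HM.br HM.α H.br H.α actML actLM ≤ (LinearMap.range d₃).comap g := by
  have hskew (x y : L) : wedge 2 ![x, y] = -wedge (K := K) 2 ![y, x] :=
    alternating_pair_swap (exteriorPower.ιMulti K 2) x y
  have hneg (x y : L) : wedge 2 ![-x, y] = -wedge (K := K) 2 ![x, y] :=
    alternating_pair_neg_left (exteriorPower.ιMulti K 2) x y
  refine Submodule.span_le.2 ?_
  rintro _ ((((⟨m, m', l, rfl⟩ | ⟨m, l, l', rfl⟩) | ⟨m, l, rfl⟩) | ⟨m, m', l, l', rfl⟩) |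
    ⟨m, m', m'', l, l', l'', rfl⟩)
  all_goals
    simp only [SetLike.mem_coe, Submodule.mem_comap, map_add, map_sub, hg, hML, hLM, hi.1, hi.2]
  · refine ⟨-wedge 3 ![i m, i m', l], ?_⟩
    rw [map_neg, hd₃, hskew (H.α (i m)), hskew (H.α (i m'))]
    abel
  · refine ⟨wedge 3 ![i m, l, l'], ?_⟩
    rw [hd₃, hskew (H.α (i m)), H.skew l (i m), H.skew l' (i m), hneg, hneg]
    abel
  · have hself (x : L) : wedge (K := K) 2 ![x, x] = 0 :=
      (exteriorPower.ιMulti K 2).map_eq_zero_of_eq _ (i := 0) (j := 1) rfl zero_ne_one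
    rw [H.skew l (i m), hneg, hself, neg_zero]
    exact zero_mem _
  · rw [H.skew l (i m), H.skew l' (i m'), hneg, hneg, hskew (H.br (i m') l'), neg_neg,
      neg_add_cancel]
    exact zero_mem _
  · simp only [H.skew _ (i _), map_neg, LinearMap.neg_apply, neg_neg]
    refine ⟨-wedge 3 ![H.br (i m) l, H.br (i m') l', H.br (i m'') l''], ?_⟩
    rw [map_neg, hd₃, H.skew (H.br (i m'') l''), hneg]
    abel

theorem range_eq_comap_span_bracket {P : Submodule K L} {D : Submodule K (P ⊗[K] L)}
    {ψ : ((P ⊗[K] L) ⧸ D) →ₗ[K] P} (hψ : ∀ m l, (ψ (D.mkQ (m ⊗ₜ l)) : L) = H.br m l) :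
    LinearMap.range ψ =
      (Submodule.span K {x | ∃ l : L, ∃ m ∈ P, x = H.br l m}).comap P.subtype := by
  have hgen : (P.subtype ∘ₗ ψ ∘ₗ D.mkQ) '' {t | ∃ m l, m ⊗ₜ l = t} =
      {x | ∃ l : L, ∃ m ∈ P, x = H.br l m} := by
    ext x
    constructor
    · rintro ⟨_, ⟨m, l, rfl⟩, rfl⟩
      exact ⟨l, -m, neg_mem m.2, (hψ m l).trans <| by rw [H.skew, map_neg]⟩
    · rintro ⟨l, m, hm, rfl⟩
      exact ⟨_, ⟨-⟨m, hm⟩, l, rfl⟩, (hψ _ l).trans <| by simp [H.skew l m]⟩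
  rw [← hgen, ← Submodule.map_span, TensorProduct.span_tmul_eq_top, Submodule.map_top,
    LinearMap.range_comp, LinearMap.range_comp_of_range_eq_top _ D.range_mkQ,
    Submodule.comap_map_eq_of_injective P.injective_subtype]

theorem neg_comp_eq_boundary₂_comp_mapQ {i : M →ₗ[K] L} {D : Submodule K (M ⊗[K] L)}
    {E : Submodule K (⋀[K]^2 L)} {ψ : ((M ⊗[K] L) ⧸ D) →ₗ[K] M}
    (hψ : ∀ m l, i (ψ (D.mkQ (m ⊗ₜ l))) = H.br (i m) l) (hd₂ : H.IsBoundary₂ d₂)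
    {d : (⋀[K]^2 L ⧸ E) →ₗ[K] L} (hd : ∀ z, d (E.mkQ z) = d₂ z)
    {g : M ⊗[K] L →ₗ[K] ⋀[K]^2 L} (hg : ∀ m l, g (m ⊗ₜ l) = wedge 2 ![i m, l])
    (hD : D ≤ E.comap g) : (-i) ∘ₗ ψ = d ∘ₗ D.mapQ E g hD := by
  refine Submodule.linearMap_qext _ (TensorProduct.ext' fun m l => ?_)
  calc -i (ψ (D.mkQ (m ⊗ₜ l))) = -H.br (i m) l := by rw [hψ]
    _ = d (E.mkQ (g (m ⊗ₜ l))) := by rw [hd, hg, hd₂]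

theorem IsHomLieHom.comp_boundary₂_eq_comp_mapQ (hf : IsHomLieHom H H' f) (hd₂ : H.IsBoundary₂ d₂)
    (hd₂' : H'.IsBoundary₂ d₂') {E : Submodule K (⋀[K]^2 L)} {E' : Submodule K (⋀[K]^2 L')}
    {d : (⋀[K]^2 L ⧸ E) →ₗ[K] L} (hd : ∀ z, d (E.mkQ z) = d₂ z)
    {d' : (⋀[K]^2 L' ⧸ E') →ₗ[K] L'} (hd' : ∀ z, d' (E'.mkQ z) = d₂' z)
    (hE : E ≤ E'.comap (exteriorPower.map 2 f)) :
    f ∘ₗ d = d' ∘ₗ E.mapQ E' (exteriorPower.map 2 f) hE := by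
  refine Submodule.linearMap_qext _ (LinearMap.ext fun z => ?_)
  calc f (d (E.mkQ z)) = d₂' (exteriorPower.map 2 f z) := by
        rw [hd]; exact congr($(hf.comp_boundary₂ hd₂ hd₂') z)
    _ = d' (E'.mkQ (exteriorPower.map 2 f z)) := (hd' _).symm

theorem exact_mapQ_exteriorPower_map_mkQ {P : Submodule K L} {D : Submodule K (P ⊗[K] L)}
    {E : Submodule K (⋀[K]^2 L)} {E' : Submodule K (⋀[K]^2 (L ⧸ P))}
    (hE : E.map (exteriorPower.map 2 P.mkQ) = E')
    {g : P ⊗[K] L →ₗ[K] ⋀[K]^2 L} (hg : ∀ m l, g (m ⊗ₜ l) = wedge 2 ![(m : L), l])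
    (hD : D ≤ E.comap g) :
    Function.Exact (D.mapQ E g hD)
      (E.mapQ E' (exteriorPower.map 2 P.mkQ) (Submodule.map_le_iff_le_comap.1 hE.le)) := by
  obtain ⟨σ, hσ⟩ := P.mkQ.exists_rightInverse_of_surjective P.range_mkQ
  have hexact : Function.Exact g (exteriorPower.map 2 P.mkQ) :=
    exact_exteriorPower_map_two (LinearMap.exact_subtype_mkQ P) hσ hg
  rw [hexact.exact_mapQ_iff, hE]
  exact inf_le_right

end HomLie

/-- Let `(M, α_M)` (the submodule `Ms`) be an ideal of a perfect Hom-Lie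
algebra `(L, α_L)`, with `M` and `L` acting on each other via the bracket of `L`.  Then
there is an exact sequence of vector spaces
`Ker(ψ_M : M⋆L → M) → H₂^α(L) → H₂^α(L/M) → M/[L,M] → 0`,
with `ψ_M(m⋆l) = [m,l]`, the first two maps induced by the inclusion `M ↪ L` and the
projection `L → L/M`, and the last map sending the class of a 2-cycle to the
corresponding class in `M/[L,M]`.  Here `H₂^α(L) = Ker(d₂)/Im(d₃)` is realized as the
kernel of the map `Λ²L/Im(d₃) → L` induced by `d₂`, where `d₂(x∧y) = −[x,y]` and
`d₃(x∧y∧z) = −[x,y]∧α(z) + [x,z]∧α(y) − [y,z]∧α(x)`. -/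
theorem statement12 {K L : Type} [Field K] [AddCommGroup L] [Module K L]
    (HL : HomLieStr K L)
    (hperf : Submodule.span K {z | ∃ x y, z = HL.br x y} = ⊤)
    (Ms : Submodule K L)
    (hideal : (∀ x ∈ Ms, HL.α x ∈ Ms) ∧ (∀ x ∈ Ms, ∀ y : L, HL.br x y ∈ Ms))
    (HM : HomLieStr K Ms)
    (hHM : (∀ x y : Ms, (HM.br x y : L) = HL.br x y) ∧ (∀ x : Ms, (HM.α x : L) = HL.α x))
    (HQ : HomLieStr K (L ⧸ Ms))
    (hHQ : (∀ x y : L, HQ.br (Ms.mkQ x) (Ms.mkQ y) = Ms.mkQ (HL.br x y)) ∧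
           (∀ x : L, HQ.α (Ms.mkQ x) = Ms.mkQ (HL.α x)))
    (aML : HomAction HM HL) (haML : ∀ (m : Ms) (l : L), aML.act m l = HL.br (m : L) l)
    (aLM : HomAction HL HM) (haLM : ∀ (l : L) (m : Ms), (aLM.act l m : L) = HL.br l (m : L))
    -- ψ_M : M⋆L → M, m⋆l ↦ −(ˡm) = [m,l]
    (ψM : ((Ms ⊗[K] L) ⧸ Dsub HM.br HM.α HL.br HL.α aML.act aLM.act) →ₗ[K] Ms)
    (hψM : ∀ (m : Ms) (l : L),
        (ψM ((Dsub HM.br HM.α HL.br HL.α aML.act aLM.act).mkQ (m ⊗ₜ[K] l)) : L) =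
        HL.br (m : L) l)
    -- the boundary maps of the Hom-Chevalley-Eilenberg complexes of L and of L/M
    (d₂L : ↥(⋀[K]^2 L) →ₗ[K] L)
    (hd₂L : ∀ x y : L, d₂L (wedge 2 ![x, y]) = - HL.br x y)
    (d₃L : ↥(⋀[K]^3 L) →ₗ[K] ↥(⋀[K]^2 L))
    (hd₃L : ∀ x y z : L, d₃L (wedge 3 ![x, y, z]) =
        - wedge 2 ![HL.br x y, HL.α z] + wedge 2 ![HL.br x z, HL.α y]
          - wedge 2 ![HL.br y z, HL.α x])
    (d₂Q : ↥(⋀[K]^2 (L ⧸ Ms)) →ₗ[K] (L ⧸ Ms))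
    (hd₂Q : ∀ x y : L ⧸ Ms, d₂Q (wedge 2 ![x, y]) = - HQ.br x y)
    (d₃Q : ↥(⋀[K]^3 (L ⧸ Ms)) →ₗ[K] ↥(⋀[K]^2 (L ⧸ Ms)))
    (hd₃Q : ∀ x y z : L ⧸ Ms, d₃Q (wedge 3 ![x, y, z]) =
        - wedge 2 ![HQ.br x y, HQ.α z] + wedge 2 ![HQ.br x z, HQ.α y]
          - wedge 2 ![HQ.br y z, HQ.α x])
    -- the maps Λ²L/Im(d₃) → L and Λ²(L/M)/Im(d₃) → L/M induced by d₂;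
    -- their kernels realize H₂^α(L) and H₂^α(L/M)
    (d₂Lbar : (↥(⋀[K]^2 L) ⧸ LinearMap.range d₃L) →ₗ[K] L)
    (hd₂Lbar : ∀ z, d₂Lbar ((LinearMap.range d₃L).mkQ z) = d₂L z)
    (d₂Qbar : (↥(⋀[K]^2 (L ⧸ Ms)) ⧸ LinearMap.range d₃Q) →ₗ[K] (L ⧸ Ms))
    (hd₂Qbar : ∀ z, d₂Qbar ((LinearMap.range d₃Q).mkQ z) = d₂Q z)
    -- the map Λ²(L) → Λ²(L/M) induced by the projection
    (Λπ : ↥(⋀[K]^2 L) →ₗ[K] ↥(⋀[K]^2 (L ⧸ Ms)))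
    (hΛπ : ∀ x y : L, Λπ (wedge 2 ![x, y]) = wedge 2 ![Ms.mkQ x, Ms.mkQ y])
    -- the linear map M ⊗ L → Λ²L, m ⊗ l ↦ m ∧ l
    (g : (Ms ⊗[K] L) →ₗ[K] ↥(⋀[K]^2 L))
    (hg : ∀ (m : Ms) (l : L), g (m ⊗ₜ[K] l) = wedge 2 ![(m : L), l])
    -- the maps of the four-term sequence
    (f₁ : ↥(LinearMap.ker ψM) →ₗ[K] ↥(LinearMap.ker d₂Lbar))
    (hf₁ : ∀ (s : Ms ⊗[K] L)
        (hs : (Dsub HM.br HM.α HL.br HL.α aML.act aLM.act).mkQ s ∈ LinearMap.ker ψM)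
        (hc : (LinearMap.range d₃L).mkQ (g s) ∈ LinearMap.ker d₂Lbar),
        f₁ ⟨(Dsub HM.br HM.α HL.br HL.α aML.act aLM.act).mkQ s, hs⟩ =
          ⟨(LinearMap.range d₃L).mkQ (g s), hc⟩)
    (f₂ : ↥(LinearMap.ker d₂Lbar) →ₗ[K] ↥(LinearMap.ker d₂Qbar))
    (hf₂ : ∀ (z : ↥(⋀[K]^2 L)) (hz : (LinearMap.range d₃L).mkQ z ∈ LinearMap.ker d₂Lbar)
        (hz' : (LinearMap.range d₃Q).mkQ (Λπ z) ∈ LinearMap.ker d₂Qbar),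
        f₂ ⟨(LinearMap.range d₃L).mkQ z, hz⟩ = ⟨(LinearMap.range d₃Q).mkQ (Λπ z), hz'⟩)
    (f₃ : ↥(LinearMap.ker d₂Qbar) →ₗ[K]
          (↥Ms ⧸ Submodule.comap Ms.subtype
            (Submodule.span K {x | ∃ l : L, ∃ m ∈ Ms, x = HL.br l m})))
    (hf₃ : ∀ (w : ↥(⋀[K]^2 L))
        (h1 : (LinearMap.range d₃Q).mkQ (Λπ w) ∈ LinearMap.ker d₂Qbar)
        (h2 : - d₂L w ∈ Ms),
        f₃ ⟨(LinearMap.range d₃Q).mkQ (Λπ w), h1⟩ =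
          Submodule.Quotient.mk ⟨- d₂L w, h2⟩) :
    LinearMap.range f₁ = LinearMap.ker f₂ ∧
    LinearMap.range f₂ = LinearMap.ker f₃ ∧
    Function.Surjective f₃ := by
  have hπ : IsHomLieHom HL HQ Ms.mkQ := ⟨fun x y => (hHQ.1 x y).symm, fun x => (hHQ.2 x).symm⟩
  obtain rfl : Λπ = exteriorPower.map 2 Ms.mkQ := exteriorPower_two_hom_ext fun x y =>
    (hΛπ x y).trans (exteriorPower_map_two_ιMulti _ x y).symm
  have hD := Dsub_le_comap_range_boundary₃ (i := Ms.subtype) hHM haML haLM hd₃L hg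
  have hE := hπ.map_range_boundary₃ Ms.mkQ_surjective hd₃L hd₃Q
  have hE_le := Submodule.map_le_iff_le_comap.1 hE.le
  have hrow := exact_mapQ_exteriorPower_map_mkQ hE hg hD
  have hrow_surj := surjective_mapQ hE_le (exteriorPower.map_surjective Ms.mkQ_surjective)
  have hrow' : Function.Exact (-Ms.subtype) Ms.mkQ :=
    LinearMap.exact_iff.2 (by rw [LinearMap.range_neg, Ms.range_subtype, Ms.ker_mkQ])
  have hinj : Function.Injective (-Ms.subtype) := neg_injective.comp Ms.injective_subtype
  have hsq := neg_comp_eq_boundary₂_comp_mapQ (i := Ms.subtype) hψM hd₂L hd₂Lbar hg hD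
  have hsq' := hπ.comp_boundary₂_eq_comp_mapQ hd₂L hd₂Q hd₂Lbar hd₂Qbar hE_le
  have hcoker : Function.Exact ψM (Submodule.mkQ _) :=
    range_eq_comap_span_bracket hψM ▸ ψM.exact_map_mkQ_range
  have hd₂_surj := HomLieStr.IsBoundary₂.surjective_of_perfect hd₂L hperf hd₂Lbar
  have hF₁ := coe_apply_of_apply_mkQ hsq hf₁
  have hF₂ := coe_apply_of_apply_mkQ hsq' hf₂
  have hδ := connecting_apply_of_apply_mkQ hd₂Lbar hE_le hf₃
  exact ⟨(exact_ker_of_exact hrow hinj hsq hF₁ hF₂).linearMap_ker_eq.symm,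
    (exact_ker_connecting hrow hrow_surj hrow' hinj hsq hsq' hcoker hF₂ hδ).linearMap_ker_eq.symm,
    surjective_connecting hrow hrow_surj hrow' hinj hsq hsq' hcoker (Submodule.mkQ_surjective _)
      hd₂_surj hδ⟩
end

section
/- Let (L, α_L) be a perfect Hom-Lie algebra (L = [L,L]), acting on itself by its bracket. Then the second homology H₂^α(L) with trivial coefficients is isomorphic as a vector space to the kernel of the homomorphism ψ : L⋆L → L given on generators by ψ(l⋆l') = [l,l']. -/
open TensorProduct

/-!
Call an alternating bilinear map `B` on `L` a `2`-cocycle when its extension to `⋀²L` kills the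
image of `d₃`. Modulo that image, the wedge `x ∧ y` is by construction the universal `2`-cocycle.
Every `2`-cocycle also respects all five families of relations defining `L ⋆ L`. Conversely, once
`⋆` is alternating, the first family of relations is the cocycle identity for `x ⋆ y`; the third and
fourth say that `⋆` is alternating on brackets, hence everywhere if brackets span `L`. So for
perfect `L` both quotients have the same universal property, and the resulting isomorphism
`x ⋆ y ↦ x ∧ y` carries `ψ` to `-d₂`.
-/

section Bilinear

variable {R M N : Type*} [CommRing R] [AddCommGroup M] [Module R M] [AddCommGroup N] [Module R N]

theorem isAlt_of_span_eq_top {s : Set M} (hs : Submodule.span R s = ⊤) {B : M →ₗ[R] M →ₗ[R] N}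
    (hself : ∀ u ∈ s, B u u = 0) (hskew : ∀ u ∈ s, ∀ v ∈ s, B u v = -B v u) : B.IsAlt := by
  have hflip : B = -B.flip :=
    LinearMap.ext_on hs fun u hu => LinearMap.ext_on hs fun v hv => hskew u hu v hv
  have hskew' (u v : M) : B u v = -B v u := LinearMap.congr_fun₂ hflip u v
  intro u
  induction hs ▸ Submodule.mem_top (x := u) using Submodule.span_induction with
  | mem u hu => exact hself u hu
  | zero => simp
  | add u v _ _ hu hv => simp [hu, hv, hskew' u v]
  | smul c u _ hu => simp [hu]

/-- An alternating bilinear map in curried form, repackaged as an alternating map in two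
variables. -/
def alternatingMapOfIsAlt (B : M →ₗ[R] M →ₗ[R] N) (hB : B.IsAlt) : M [⋀^Fin 2]→ₗ[R] N where
  toFun v := B (v 0) (v 1)
  map_update_add' v i x y := by fin_cases i <;> simp [Function.update]
  map_update_smul' v i c x := by fin_cases i <;> simp [Function.update]
  map_eq_zero_of_eq' v i j hv hij := by
    have h : v 0 = v 1 := by fin_cases i <;> fin_cases j <;> simp_all
    rw [h, hB (v 1)]

variable (R M) in
/-- The universal alternating bilinear map `(x, y) ↦ x ∧ y` into the exterior square, in curried
form. -/
def wedgeBilin : M →ₗ[R] M →ₗ[R] ⋀[R]^2 M :=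
  LinearMap.mk₂ R (fun x y => exteriorPower.ιMulti R 2 ![x, y])
    (fun x x' y => (exteriorPower.ιMulti R 2).map_vecCons_add ![y] x x')
    (fun c x y => (exteriorPower.ιMulti R 2).map_vecCons_smul ![y] c x)
    (fun x y y' => ((exteriorPower.ιMulti R 2).curryLeft x).map_vecCons_add ![] y y')
    (fun c x y => ((exteriorPower.ιMulti R 2).curryLeft x).map_vecCons_smul ![] c y)

theorem isAlt_wedgeBilin : (wedgeBilin R M).IsAlt := fun x =>
  (exteriorPower.ιMulti R 2).map_eq_zero_of_eq ![x, x] (i := 0) (j := 1) rfl zero_ne_one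

/-- The linear map out of the exterior square corresponding to an alternating bilinear map. -/
noncomputable def wedgeLift (B : M →ₗ[R] M →ₗ[R] N) (hB : B.IsAlt) : ⋀[R]^2 M →ₗ[R] N :=
  exteriorPower.alternatingMapLinearEquiv (alternatingMapOfIsAlt B hB)

theorem wedgeLift_wedgeBilin {B : M →ₗ[R] M →ₗ[R] N} (hB : B.IsAlt) (x y : M) :
    wedgeLift B hB (wedgeBilin R M x y) = B x y :=
  exteriorPower.alternatingMapLinearEquiv_apply_ιMulti _ _

end Bilinear

section Cocycle

variable {R L M : Type*} [CommRing R] [AddCommGroup L] [Module R L] [AddCommGroup M] [Module R M]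

/-- A `2`-cocycle, with values in the trivial module `M`, of the algebra `L` with bracket `br`
and twist `α`: an alternating bilinear map whose extension to `⋀²L` vanishes on the image of
`d₃`. -/
structure IsTwoCocycle (br : L →ₗ[R] L →ₗ[R] L) (α : L →ₗ[R] L) (B : L →ₗ[R] L →ₗ[R] M) :
    Prop where
  isAlt : B.IsAlt
  closed : ∀ x y z, B (br x y) (α z) - B (br x z) (α y) + B (br y z) (α x) = 0

/-- The submodule `D(L, L)` of relations of `L ⋆ L`, for `L` acting on itself by its bracket. For
a Hom-Lie algebra over a field it is definitionally `Dsub` with both actions equal to the bracket.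
-/
def starRelations (br : L →ₗ[R] L →ₗ[R] L) (α : L →ₗ[R] L) : Submodule R (L ⊗[R] L) :=
  Submodule.span R
    ({t | ∃ x x' y, t = br x x' ⊗ₜ[R] α y - α x ⊗ₜ[R] br x' y + α x' ⊗ₜ[R] br x y} ∪
     {t | ∃ x y y', t = α x ⊗ₜ[R] br y y' - br y' x ⊗ₜ[R] α y + br y x ⊗ₜ[R] α y'} ∪
     {t | ∃ x y, t = br y x ⊗ₜ[R] br x y} ∪
     {t | ∃ x x' y y', t = br y x ⊗ₜ[R] br x' y' + br y' x' ⊗ₜ[R] br x y} ∪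
     {t | ∃ x x' x'' y y' y'', t =
        br (br y x) (br y' x') ⊗ₜ[R] α (br x'' y'') +
        br (br y' x') (br y'' x'') ⊗ₜ[R] α (br x y) +
        br (br y'' x'') (br y x) ⊗ₜ[R] α (br x' y')})

/-- The bilinear map `(x, y) ↦ x ⋆ y` from `L` to its tensor square `L ⋆ L`. -/
def starBilin (br : L →ₗ[R] L →ₗ[R] L) (α : L →ₗ[R] L) :
    L →ₗ[R] L →ₗ[R] (L ⊗[R] L) ⧸ starRelations br α :=
  (TensorProduct.mk R L L).compr₂ (starRelations br α).mkQ

variable {br : L →ₗ[R] L →ₗ[R] L} {α : L →ₗ[R] L}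

theorem starBilin_hom_ext {f g : (L ⊗[R] L) ⧸ starRelations br α →ₗ[R] M}
    (h : ∀ x y, f (starBilin br α x y) = g (starBilin br α x y)) : f = g :=
  Submodule.linearMap_qext _ (TensorProduct.ext' h)

section Skew

variable (hskew : ∀ x y, br x y = -br y x)
include hskew

theorem starBilin_br_self (x y : L) : starBilin br α (br x y) (br x y) = 0 := by
  have h : starBilin br α (br y x) (br x y) = 0 :=
    (Submodule.Quotient.mk_eq_zero _).2 <| Submodule.subset_span <| .inl <| .inl <| .inr ⟨x, y, rfl⟩
  simpa only [hskew y x, map_neg, LinearMap.neg_apply, neg_eq_zero] using h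

theorem starBilin_br_br (x y x' y' : L) :
    starBilin br α (br x y) (br x' y') = -starBilin br α (br x' y') (br x y) := by
  have h : starBilin br α (br y x) (br x' y') + starBilin br α (br y' x') (br x y) = 0 :=
    (Submodule.Quotient.mk_eq_zero _).2 <|
      Submodule.subset_span <| .inl <| .inr ⟨x, x', y, y', rfl⟩
  rw [hskew y x, hskew y' x'] at h
  simp only [map_neg, LinearMap.neg_apply] at h
  exact neg_injective (eq_neg_of_add_eq_zero_left h)

theorem isAlt_starBilin (hperf : Submodule.span R {z | ∃ x y, z = br x y} = ⊤) :
    (starBilin br α).IsAlt := by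
  refine isAlt_of_span_eq_top hperf ?_ ?_
  · rintro _ ⟨x, y, rfl⟩
    exact starBilin_br_self hskew x y
  · rintro _ ⟨x, y, rfl⟩ _ ⟨x', y', rfl⟩
    exact starBilin_br_br hskew x y x' y'

theorem isTwoCocycle_starBilin (hperf : Submodule.span R {z | ∃ x y, z = br x y} = ⊤) :
    IsTwoCocycle br α (starBilin br α) where
  isAlt := isAlt_starBilin hskew hperf
  closed x y z := by
    have hneg := (isAlt_starBilin (α := α) hskew hperf).neg
    have h : starBilin br α (br x y) (α z) - starBilin br α (α x) (br y z)
        + starBilin br α (α y) (br x z) = 0 :=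
      (Submodule.Quotient.mk_eq_zero _).2 <|
        Submodule.subset_span <| .inl <| .inl <| .inl <| .inl ⟨x, y, z, rfl⟩
    rw [← h, ← hneg _ (α x), ← hneg _ (α y)]
    abel

namespace IsTwoCocycle

variable {B : L →ₗ[R] L →ₗ[R] M}

theorem starRelations_le_ker_lift (hB : IsTwoCocycle br α B) :
    starRelations br α ≤ LinearMap.ker (TensorProduct.lift B) := by
  have hneg := hB.isAlt.neg
  rw [starRelations, Submodule.span_le]
  rintro t ((((⟨x, y, z, rfl⟩ | ⟨x, y, z, rfl⟩) | ⟨x, y, rfl⟩) | ⟨x, x', y, y', rfl⟩) |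
    ⟨x, x', x'', y, y', y'', rfl⟩) <;>
    simp only [SetLike.mem_coe, LinearMap.mem_ker, map_add, map_sub, TensorProduct.lift.tmul]
  · rw [← hB.closed x y z, ← hneg _ (α x), ← hneg _ (α y)]
    abel
  · rw [← neg_eq_zero, ← hB.closed x y z, ← hneg _ (α x), hskew y x, hskew z x]
    simp only [map_neg, LinearMap.neg_apply]
    abel
  · rw [hskew y x, map_neg, LinearMap.neg_apply, hB.isAlt, neg_zero]
  · rw [hskew y x, hskew y' x', ← hneg (br x y)]
    simp only [map_neg, LinearMap.neg_apply]
    abel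
  · rw [← hB.closed (br x y) (br x' y') (br x'' y''), hskew y x, hskew y' x',
      hskew y'' x'', hskew (-br x'' y'')]
    simp only [map_neg, LinearMap.neg_apply]
    abel

/-- The linear map out of `L ⋆ L` corresponding to a `2`-cocycle. -/
def starLift (hB : IsTwoCocycle br α B) : (L ⊗[R] L) ⧸ starRelations br α →ₗ[R] M :=
  (starRelations br α).liftQ (TensorProduct.lift B) (hB.starRelations_le_ker_lift hskew)

theorem starLift_starBilin (hB : IsTwoCocycle br α B) (x y : L) :
    hB.starLift hskew (starBilin br α x y) = B x y :=
  TensorProduct.lift.tmul x y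

end IsTwoCocycle

end Skew

end Cocycle

section ExteriorQuotient

variable {R L M : Type*} [CommRing R] [AddCommGroup L] [Module R L] [AddCommGroup M] [Module R M]
  {br : L →ₗ[R] L →ₗ[R] L} {α : L →ₗ[R] L} {d₃ : ⋀[R]^3 L →ₗ[R] ⋀[R]^2 L}

variable (d₃) in
/-- The bilinear map `(x, y) ↦ x ∧ y` modulo the image of `d₃`. -/
def wedgeBilinMod : L →ₗ[R] L →ₗ[R] ⋀[R]^2 L ⧸ LinearMap.range d₃ :=
  (wedgeBilin R L).compr₂ (LinearMap.range d₃).mkQ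

theorem isAlt_wedgeBilinMod : (wedgeBilinMod d₃).IsAlt := fun x => by
  rw [wedgeBilinMod, LinearMap.compr₂_apply, isAlt_wedgeBilin, map_zero]

theorem wedgeBilinMod_hom_ext {f g : ⋀[R]^2 L ⧸ LinearMap.range d₃ →ₗ[R] M}
    (h : ∀ x y, f (wedgeBilinMod d₃ x y) = g (wedgeBilinMod d₃ x y)) : f = g := by
  refine Submodule.linearMap_qext _ (exteriorPower.linearMap_ext ?_)
  ext v
  rw [show v = ![v 0, v 1] from (FinVec.etaExpand_eq v).symm]
  exact h (v 0) (v 1)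

variable (hd₃ : ∀ x y z, d₃ (exteriorPower.ιMulti R 3 ![x, y, z]) =
  -wedgeBilin R L (br x y) (α z) + wedgeBilin R L (br x z) (α y) - wedgeBilin R L (br y z) (α x))
include hd₃

theorem isTwoCocycle_wedgeBilinMod : IsTwoCocycle br α (wedgeBilinMod d₃) where
  isAlt := isAlt_wedgeBilinMod
  closed x y z := by
    have h : (LinearMap.range d₃).mkQ (d₃ (exteriorPower.ιMulti R 3 ![x, y, z])) = 0 :=
      (Submodule.Quotient.mk_eq_zero _).2 (LinearMap.mem_range_self _ _)
    rw [hd₃] at h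
    rw [← neg_eq_zero, ← h]
    simp only [wedgeBilinMod, LinearMap.compr₂_apply, map_add, map_sub, map_neg]
    abel

namespace IsTwoCocycle

variable {B : L →ₗ[R] L →ₗ[R] M}

theorem range_le_ker_wedgeLift (hB : IsTwoCocycle br α B) :
    LinearMap.range d₃ ≤ LinearMap.ker (wedgeLift B hB.isAlt) := by
  rw [LinearMap.range_le_ker_iff]
  refine exteriorPower.linearMap_ext ?_
  ext v
  rw [show v = ![v 0, v 1, v 2] from (FinVec.etaExpand_eq v).symm]
  simp only [LinearMap.compAlternatingMap_apply, LinearMap.comp_apply, LinearMap.zero_apply,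
    hd₃, map_add, map_sub, map_neg, wedgeLift_wedgeBilin]
  rw [← neg_eq_zero, ← hB.closed (v 0) (v 1) (v 2)]
  abel

/-- The linear map out of `⋀²L ⧸ im d₃` corresponding to a `2`-cocycle. -/
noncomputable def wedgeModLift (hB : IsTwoCocycle br α B) : ⋀[R]^2 L ⧸ LinearMap.range d₃ →ₗ[R] M :=
  (LinearMap.range d₃).liftQ (wedgeLift B hB.isAlt) (hB.range_le_ker_wedgeLift hd₃)

theorem wedgeModLift_wedgeBilinMod (hB : IsTwoCocycle br α B) (x y : L) :
    hB.wedgeModLift hd₃ (wedgeBilinMod d₃ x y) = B x y :=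
  wedgeLift_wedgeBilin hB.isAlt x y

end IsTwoCocycle

variable (hskew : ∀ x y, br x y = -br y x)
  (hperf : Submodule.span R {z | ∃ x y, z = br x y} = ⊤)
include hskew hperf

/-- For a perfect algebra both `L ⋆ L` and `⋀²L ⧸ im d₃` carry a universal `2`-cocycle, so
`x ⋆ y ↦ x ∧ y` is an isomorphism. -/
noncomputable def starEquivWedgeMod :
    ((L ⊗[R] L) ⧸ starRelations br α) ≃ₗ[R] (⋀[R]^2 L ⧸ LinearMap.range d₃) :=
  LinearEquiv.ofLinearMap
    ((isTwoCocycle_wedgeBilinMod hd₃).starLift hskew)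
    ((isTwoCocycle_starBilin hskew hperf).wedgeModLift hd₃)
    (wedgeBilinMod_hom_ext fun x y => by
      simp only [LinearMap.comp_apply, LinearMap.id_apply,
        IsTwoCocycle.wedgeModLift_wedgeBilinMod, IsTwoCocycle.starLift_starBilin])
    (starBilin_hom_ext fun x y => by
      simp only [LinearMap.comp_apply, LinearMap.id_apply,
        IsTwoCocycle.wedgeModLift_wedgeBilinMod, IsTwoCocycle.starLift_starBilin])

theorem starEquivWedgeMod_starBilin (x y : L) :
    starEquivWedgeMod hd₃ hskew hperf (starBilin br α x y) = wedgeBilinMod d₃ x y :=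
  (isTwoCocycle_wedgeBilinMod hd₃).starLift_starBilin hskew x y

end ExteriorQuotient

theorem statement13_general {R L : Type*} [CommRing R] [AddCommGroup L] [Module R L]
    {br : L →ₗ[R] L →ₗ[R] L} {α : L →ₗ[R] L} (hskew : ∀ x y, br x y = -br y x)
    (hperf : Submodule.span R {z | ∃ x y, z = br x y} = ⊤)
    (ψ : (L ⊗[R] L) ⧸ starRelations br α →ₗ[R] L)
    (hψ : ∀ x y, ψ ((starRelations br α).mkQ (x ⊗ₜ[R] y)) = br x y)
    (d₃ : ⋀[R]^3 L →ₗ[R] ⋀[R]^2 L)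
    (hd₃ : ∀ x y z, d₃ (exteriorPower.ιMulti R 3 ![x, y, z]) =
      -exteriorPower.ιMulti R 2 ![br x y, α z] + exteriorPower.ιMulti R 2 ![br x z, α y]
        - exteriorPower.ιMulti R 2 ![br y z, α x])
    (d₂bar : ⋀[R]^2 L ⧸ LinearMap.range d₃ →ₗ[R] L)
    (hd₂bar : ∀ x y, d₂bar ((LinearMap.range d₃).mkQ (exteriorPower.ιMulti R 2 ![x, y])) =
      -br x y) :
    Nonempty (LinearMap.ker d₂bar ≃ₗ[R] LinearMap.ker ψ) := by
  let e := starEquivWedgeMod hd₃ hskew hperf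
  have hψe : ψ = -(d₂bar ∘ₗ e.toLinearMap) := starBilin_hom_ext fun x y => by
    calc ψ (starBilin br α x y) = -(-br x y) := by rw [neg_neg]; exact hψ x y
      _ = -d₂bar (wedgeBilinMod d₃ x y) := congrArg Neg.neg (hd₂bar x y).symm
      _ = -d₂bar (e (starBilin br α x y)) := by
        rw [starEquivWedgeMod_starBilin hd₃ hskew hperf]
  have hker : LinearMap.ker ψ = (LinearMap.ker d₂bar).comap e.toLinearMap := by
    rw [hψe, LinearMap.ker_neg, LinearMap.ker_comp]
  rw [hker]
  exact ⟨(e.ofSubmodule' (LinearMap.ker d₂bar)).symm⟩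

/-- Let `(L, α_L)` be a perfect Hom-Lie algebra acting on itself by its
bracket.  Then the second homology `H₂^α(L)` with trivial coefficients — realized as the
kernel of the map `Λ²L/Im(d₃) → L` induced by `d₂`, where `d₂(x∧y) = −[x,y]` and
`d₃(x∧y∧z) = −[x,y]∧α(z) + [x,z]∧α(y) − [y,z]∧α(x)` — is isomorphic as a vector space to
the kernel of the homomorphism `ψ : L⋆L → L`, `l⋆l' ↦ [l,l']`. -/
theorem statement13 {K L : Type} [Field K] [AddCommGroup L] [Module K L]
    (HL : HomLieStr K L)
    (hperf : Submodule.span K {z | ∃ x y, z = HL.br x y} = ⊤)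
    (aLL : HomAction HL HL) (haLL : ∀ x y : L, aLL.act x y = HL.br x y)
    (ψ : ((L ⊗[K] L) ⧸ Dsub HL.br HL.α HL.br HL.α aLL.act aLL.act) →ₗ[K] L)
    (hψ : ∀ x y : L,
        ψ ((Dsub HL.br HL.α HL.br HL.α aLL.act aLL.act).mkQ (x ⊗ₜ[K] y)) = HL.br x y)
    (d₂ : ↥(⋀[K]^2 L) →ₗ[K] L)
    (hd₂ : ∀ x y : L, d₂ (wedge 2 ![x, y]) = - HL.br x y)
    (d₃ : ↥(⋀[K]^3 L) →ₗ[K] ↥(⋀[K]^2 L))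
    (hd₃ : ∀ x y z : L, d₃ (wedge 3 ![x, y, z]) =
        - wedge 2 ![HL.br x y, HL.α z] + wedge 2 ![HL.br x z, HL.α y]
          - wedge 2 ![HL.br y z, HL.α x])
    (d₂bar : (↥(⋀[K]^2 L) ⧸ LinearMap.range d₃) →ₗ[K] L)
    (hd₂bar : ∀ z, d₂bar ((LinearMap.range d₃).mkQ z) = d₂ z) :
    Nonempty (↥(LinearMap.ker d₂bar) ≃ₗ[K] ↥(LinearMap.ker ψ)) := by
  obtain ⟨act, _, _, _⟩ := aLL
  obtain rfl : act = HL.br := LinearMap.ext₂ haLL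
  exact statement13_general HL.skew hperf ψ hψ d₃ hd₃ d₂bar fun x y => (hd₂bar _).trans (hd₂ x y)
end

section
/- Let (M, α_M) ↣ (K, α_K) →π (L, α_L) be a central extension with (K, α_K) an α-perfect Hom-Lie algebra (K = [α_K(K), α_K(K)]), and let (M', α_{M'}) ↣ (K', α_{K'}) →π' (L, α_L) be an α-central extension. Then there exists at most one homomorphism of Hom-Lie algebras f : (K, α_K) → (K', α_{K'}) such that π' ∘ f = π. -/
open TensorProduct

/-! Two lifts `f₁`, `f₂` of the same map through `π'` differ by elements of `ker π'`. Since
`α (ker π')` is central, this difference does not affect brackets of the form `[α x, α y]`, so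
`f₁` and `f₂` agree on such brackets, and these span an α-perfect source. -/

namespace HomLieStr

variable {K L : Type} [Field K] [AddCommGroup L] [Module K L]

/-- An α-perfect Hom-Lie algebra: `L = [α(L), α(L)]`, where the right-hand side is the linear span
of the brackets. -/
def IsAlphaPerfect (H : HomLieStr K L) : Prop :=
  Submodule.span K {z | ∃ x y, z = H.br (H.α x) (H.α y)} = ⊤

/-- A subspace `M` with `[α(M), L] = 0`; an extension is α-central when its kernel satisfies this.
The subspace is required neither to be an ideal nor to be stable under `α`. -/
def IsAlphaCentral (H : HomLieStr K L) (M : Submodule K L) : Prop :=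
  ∀ x ∈ M, ∀ y, H.br (H.α x) y = 0

theorem IsAlphaPerfect.linearMap_ext {V : Type*} [AddCommGroup V] [Module K V]
    {H : HomLieStr K L} (hH : H.IsAlphaPerfect) {f g : L →ₗ[K] V}
    (hfg : ∀ x y, f (H.br (H.α x) (H.α y)) = g (H.br (H.α x) (H.α y))) : f = g := by
  refine LinearMap.ext_on hH ?_
  rintro _ ⟨x, y, rfl⟩
  exact hfg x y

theorem IsAlphaCentral.br_α_left_congr {H : HomLieStr K L} {M : Submodule K L}
    (hM : H.IsAlphaCentral M) {x x' : L} (hx : x - x' ∈ M) (y : L) :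
    H.br (H.α x) y = H.br (H.α x') y := by
  rw [← sub_eq_zero, ← LinearMap.sub_apply, ← map_sub, ← map_sub]
  exact hM _ hx y

theorem IsAlphaCentral.br_α_α_congr {H : HomLieStr K L} {M : Submodule K L}
    (hM : H.IsAlphaCentral M) {x x' y y' : L} (hx : x - x' ∈ M) (hy : y - y' ∈ M) :
    H.br (H.α x) (H.α y) = H.br (H.α x') (H.α y') :=
  calc
    H.br (H.α x) (H.α y) = H.br (H.α x') (H.α y) := hM.br_α_left_congr hx _
    _ = -H.br (H.α y) (H.α x') := H.skew _ _
    _ = -H.br (H.α y') (H.α x') := by rw [hM.br_α_left_congr hy]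
    _ = H.br (H.α x') (H.α y') := (H.skew _ _).symm

end HomLieStr

theorem IsHomLieHom.map_br_α_α {K L L' : Type} [Field K] [AddCommGroup L] [Module K L]
    [AddCommGroup L'] [Module K L'] {H : HomLieStr K L} {H' : HomLieStr K L'} {f : L →ₗ[K] L'}
    (hf : IsHomLieHom H H' f) (x y : L) :
    f (H.br (H.α x) (H.α y)) = H'.br (H'.α (f x)) (H'.α (f y)) := by
  rw [hf.1, hf.2, hf.2]

theorem statement15_general {K K₀ K' : Type} {V : Type*} [Field K]
    [AddCommGroup K₀] [Module K K₀] [AddCommGroup K'] [Module K K']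
    [AddCommGroup V] [Module K V]
    {HK₀ : HomLieStr K K₀} {HK' : HomLieStr K K'} (hK₀ : HK₀.IsAlphaPerfect)
    {π' : K' →ₗ[K] V} (hπ' : HK'.IsAlphaCentral (LinearMap.ker π'))
    {f₁ f₂ : K₀ →ₗ[K] K'} (hf₁ : IsHomLieHom HK₀ HK' f₁) (hf₂ : IsHomLieHom HK₀ HK' f₂)
    (hlift : π' ∘ₗ f₁ = π' ∘ₗ f₂) : f₁ = f₂ := by
  have hdiff (x : K₀) : f₁ x - f₂ x ∈ LinearMap.ker π' :=
    LinearMap.sub_mem_ker_iff.mpr (LinearMap.congr_fun hlift x)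
  refine hK₀.linearMap_ext fun x y => ?_
  rw [hf₁.map_br_α_α, hf₂.map_br_α_α]
  exact hπ'.br_α_α_congr (hdiff x) (hdiff y)

/-- Let `(M,α_M) ↣ (K₀,α_{K₀}) →π (L,α_L)` be a central extension with
`(K₀, α_{K₀})` α-perfect (`K₀ = [α(K₀), α(K₀)]`), and let
`(M',α_{M'}) ↣ (K',α_{K'}) →π' (L,α_L)` be an α-central extension.  Then there is at most
one homomorphism of Hom-Lie algebras `f : (K₀,α_{K₀}) → (K',α_{K'})` with `π' ∘ f = π`.
(Central: the kernel brackets trivially with everything; α-central: the image of the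
kernel under the structure endomorphism brackets trivially with everything.) -/
theorem statement15 {K K₀ K' L : Type} [Field K]
    [AddCommGroup K₀] [Module K K₀] [AddCommGroup K'] [Module K K']
    [AddCommGroup L] [Module K L]
    (HK₀ : HomLieStr K K₀) (HK' : HomLieStr K K') (HL : HomLieStr K L)
    (π : K₀ →ₗ[K] L) (hπ : IsHomLieHom HK₀ HL π) (hπsurj : Function.Surjective π)
    (hcentral : ∀ x, π x = 0 → ∀ y, HK₀.br x y = 0)
    (hαperf : Submodule.span K {z | ∃ x y, z = HK₀.br (HK₀.α x) (HK₀.α y)} = ⊤)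
    (π' : K' →ₗ[K] L) (hπ' : IsHomLieHom HK' HL π') (hπ'surj : Function.Surjective π')
    (hαcentral : ∀ x, π' x = 0 → ∀ y, HK'.br (HK'.α x) y = 0) :
    ∀ f₁ f₂ : K₀ →ₗ[K] K', IsHomLieHom HK₀ HK' f₁ → IsHomLieHom HK₀ HK' f₂ →
      π' ∘ₗ f₁ = π → π' ∘ₗ f₂ = π → f₁ = f₂ :=
  fun _ _ hf₁ hf₂ h₁ h₂ => statement15_general hαperf hαcentral hf₁ hf₂ (h₁.trans h₂.symm)
end

section
/- Let (A, α_A) be a Hom-associative algebra over a field K of characteristic 0, regarded as a Hom-Lie algebra with commutator bracket [a,b] = ab − ba, and let (L^α(A), ᾱ_A) be the Hom-Lie algebra (A⊗A)/J(A,α) with bracket [a⊗b, a'⊗b'] = [a,b]⊗[a',b']. Then: (1) the formulas ^{a'}(a⊗b) = [a',a]⊗α_A(b) + α_A(a)⊗[a',b] and ^{(a⊗b)}a' = [[a,b], a'] define Hom-actions of (A, α_A) on (L^α(A), ᾱ_A) and of (L^α(A), ᾱ_A) on (A, α_A), respectively; and (2) if (A, α_A) satisfies the α-identity condition [a,b]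 = [α_A(a), b] for all a,b ∈ A, then these two Hom-actions are compatible. -/
open TensorProduct

/-- A (multiplicative) Hom-associative algebra structure on a vector space `A`. -/
structure HomAssocStr (K : Type) [Field K] (A : Type) [AddCommGroup A] [Module K A] : Type where
  mul : A →ₗ[K] A →ₗ[K] A
  α : A →ₗ[K] A
  hassoc : ∀ a b c, mul (α a) (mul b c) = mul (mul a b) (α c)
  αmul : ∀ a b, α (mul a b) = mul (α a) (α b)

/-- The subspace `J(A,α)` of `A ⊗ A` generated by `a⊗b + b⊗a` and
`ab⊗α(c) − α(a)⊗bc + ca⊗α(b)`; the quotient `(A⊗A)/J(A,α)` is `L^α(A)`. -/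
def Jsub {K A : Type} [Field K] [AddCommGroup A] [Module K A] (HA : HomAssocStr K A) :
    Submodule K (A ⊗[K] A) :=
  Submodule.span K
    ({x | ∃ a b, x = a ⊗ₜ[K] b + b ⊗ₜ[K] a} ∪
     {x | ∃ a b c, x = HA.mul a b ⊗ₜ[K] HA.α c - HA.α a ⊗ₜ[K] HA.mul b c
        + HA.mul c a ⊗ₜ[K] HA.α b})

/-!
Write `s(a, b)` for the class of `a ⊗ b` in `L^α(A)`. The bracket of `A` factors as
`[a, b] = β (s(a, b))` through a linear map `β : L^α(A) → A`, and the bracket of `L^α(A)` is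
`[m, m'] = s(β m, β m')`. The defining relations of `J(A, α)` make `s` skew-symmetric and give
`s([x, a], α b) + s(α a, [x, b]) = s(α x, [a, b])`. Hence the first action is
`(x, m) ↦ s(α x, β m)`, which is well defined on the quotient, and the second one is the adjoint
action of `A` pulled back along the Hom-Lie homomorphism `β`; the action axioms reduce to the
Leibniz identity for `s` and the Hom-Jacobi identity for `A`.
-/

attribute [ext] HomLieStr HomAction

namespace HomLieStr

variable {K L : Type} [Field K] [AddCommGroup L] [Module K L]

theorem br_leibniz (HL : HomLieStr K L) (x y z : L) :
    HL.br (HL.α x) (HL.br y z) = HL.br (HL.br x y) (HL.α z) + HL.br (HL.α y) (HL.br x z) := by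
  have hjacobi := HL.jacobi x y z
  rw [HL.skew (HL.α z), HL.skew z x, map_neg] at hjacobi
  rw [← sub_eq_zero, ← hjacobi]
  abel

end HomLieStr

namespace HomAction

section Adjoint

variable {K L : Type} [Field K] [AddCommGroup L] [Module K L]

/-- The adjoint Hom-action `ˣy = [x, y]` of a Hom-Lie algebra on itself. -/
def adjoint (HL : HomLieStr K L) : HomAction HL HL where
  act := HL.br
  ax1 x y m := eq_sub_of_add_eq (HL.br_leibniz x y m).symm
  ax2 := HL.br_leibniz
  ax3 := HL.αbr

end Adjoint

variable {K L L' M : Type} [Field K] [AddCommGroup L] [Module K L] [AddCommGroup L'] [Module K L']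
  [AddCommGroup M] [Module K M] {HL : HomLieStr K L} {HL' : HomLieStr K L'} {HM : HomLieStr K M}

/-- The pullback `ˣm = ^{f(x)}m` of a Hom-action along a homomorphism `f` of Hom-Lie algebras. -/
def comap (a : HomAction HL HM) {f : L' →ₗ[K] L} (hf : IsHomLieHom HL' HL f) :
    HomAction HL' HM where
  act := a.act ∘ₗ f
  ax1 x y m := by simp only [LinearMap.comp_apply, hf.1, hf.2, a.ax1]
  ax2 x m m' := by simp only [LinearMap.comp_apply, hf.2, a.ax2]
  ax3 x m := by simp only [LinearMap.comp_apply, hf.2, a.ax3]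

end HomAction

/-- A lift of the bracket of a Hom-Lie algebra `(L, HL)` to a vector space `M` with an endomorphism:
the bracket factors as `proj (lift x y)`, where the bilinear map `lift : L × L → M` is
skew-symmetric and satisfies the Leibniz identity, and both maps commute with the endomorphisms.
No bracket on `M` is given; `BracketLift.homLieStr` induces one. The notion isolates the
properties of `L^α(A)` over `A` on which the Hom-actions depend. -/
structure BracketLift {K L : Type} [Field K] [AddCommGroup L] [Module K L] (HL : HomLieStr K L)
    (M : Type) [AddCommGroup M] [Module K M] : Type where
  lift : L →ₗ[K] L →ₗ[K] M
  proj : M →ₗ[K] L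
  α : M →ₗ[K] M
  proj_lift : ∀ x y, proj (lift x y) = HL.br x y
  proj_α : ∀ m, proj (α m) = HL.α (proj m)
  α_lift : ∀ x y, α (lift x y) = lift (HL.α x) (HL.α y)
  skew : ∀ x y, lift x y = -lift y x
  leibniz : ∀ x y z, lift (HL.α x) (HL.br y z) =
    lift (HL.br x y) (HL.α z) + lift (HL.α y) (HL.br x z)

namespace BracketLift

variable {K L M : Type} [Field K] [AddCommGroup L] [Module K L] [AddCommGroup M] [Module K M]
  {HL : HomLieStr K L} (B : BracketLift HL M)

/-- The Hom-Lie structure induced by a lift of the bracket, with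
`[m, m'] = lift (proj m) (proj m')`. -/
def homLieStr : HomLieStr K M where
  br := B.lift.compl₁₂ B.proj B.proj
  α := B.α
  skew m m' := B.skew (B.proj m) (B.proj m')
  jacobi x y z := by
    simp only [LinearMap.compl₁₂_apply, B.proj_α, B.proj_lift]
    rw [B.leibniz, B.skew (HL.α (B.proj z)), HL.skew (B.proj z), map_neg]
    abel
  αbr m m' := by simp only [LinearMap.compl₁₂_apply, B.α_lift, B.proj_α]

theorem isHomLieHom_proj : IsHomLieHom B.homLieStr HL B.proj :=
  ⟨fun m m' => B.proj_lift (B.proj m) (B.proj m'), B.proj_α⟩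

/-- The Hom-action `ˣm = lift (α x) (proj m)` of `L` on `M`. -/
def liftAction : HomAction HL B.homLieStr where
  act := B.lift.compl₁₂ HL.α B.proj
  ax1 x y m := by
    simp only [homLieStr, LinearMap.compl₁₂_apply, B.proj_α, B.proj_lift, HL.αbr]
    exact eq_sub_of_add_eq (B.leibniz (HL.α x) (HL.α y) (B.proj m)).symm
  ax2 x m m' := by
    simp only [homLieStr, LinearMap.compl₁₂_apply, B.proj_α, B.proj_lift]
    exact B.leibniz (HL.α x) (B.proj m) (B.proj m')
  ax3 x m := by
    simp only [homLieStr, LinearMap.compl₁₂_apply, B.proj_α, B.α_lift]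

theorem liftAction_act_lift (x a b : L) :
    B.liftAction.act x (B.lift a b) =
      B.lift (HL.br x a) (HL.α b) + B.lift (HL.α a) (HL.br x b) :=
  (congrArg (B.lift (HL.α x)) (B.proj_lift a b)).trans (B.leibniz x a b)

/-- The Hom-action `ᵐx = [proj m, x]` of `M` on `L`. -/
def projAction : HomAction B.homLieStr HL :=
  (HomAction.adjoint HL).comap B.isHomLieHom_proj

theorem projAction_act_lift (a b x : L) :
    B.projAction.act (B.lift a b) x = HL.br (HL.br a b) x :=
  congrArg (HL.br · x) (B.proj_lift a b)

theorem compatible_liftAction_projAction (hα : ∀ x y, HL.br x y = HL.br (HL.α x) y) :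
    Compatible B.liftAction B.projAction := by
  constructor
  · intro x m y
    calc HL.br (B.proj (B.lift (HL.α x) (B.proj m))) y
        = HL.br (HL.br x (B.proj m)) y := by rw [B.proj_lift, ← hα]
      _ = HL.br y (HL.br (B.proj m) x) := by
        rw [HL.skew y, HL.skew (B.proj m), map_neg, LinearMap.neg_apply, neg_neg]
  · intro m x m'
    calc B.lift (HL.α (HL.br (B.proj m) x)) (B.proj m')
        = B.lift (HL.br (B.proj m) (HL.α x)) (B.proj m') := by rw [HL.αbr, ← hα]
      _ = B.lift (B.proj m') (HL.br (HL.α x) (B.proj m)) := by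
        rw [B.skew (B.proj m'), HL.skew (HL.α x), map_neg, LinearMap.neg_apply, neg_neg]
      _ = B.lift (B.proj m') (B.proj (B.lift (HL.α x) (B.proj m))) := by rw [B.proj_lift]

end BracketLift

namespace HomAssocStr

variable {K A : Type} [Field K] [AddCommGroup A] [Module K A] (HA : HomAssocStr K A)

/-- The commutator Hom-Lie structure `[a, b] = ab - ba` of a Hom-associative algebra. -/
def commutator : HomLieStr K A where
  br := HA.mul - HA.mul.flip
  α := HA.α
  skew a b := (neg_sub (HA.mul b a) (HA.mul a b)).symm
  jacobi a b c := by
    simp only [LinearMap.sub_apply, LinearMap.flip_apply, map_sub, HA.hassoc]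
    abel
  αbr a b := by simp only [LinearMap.sub_apply, LinearMap.flip_apply, map_sub, HA.αmul]

theorem commutator_br_apply (a b : A) : HA.commutator.br a b = HA.mul a b - HA.mul b a :=
  rfl

/-- The bilinear map sending `(a, b)` to the class of `a ⊗ b` in `L^α(A)`. -/
def tensorClass : A →ₗ[K] A →ₗ[K] (A ⊗[K] A) ⧸ Jsub HA :=
  (TensorProduct.mk K A A).compr₂ (Jsub HA).mkQ

theorem tensorClass_skew (a b : A) : HA.tensorClass a b = -HA.tensorClass b a :=
  eq_neg_of_add_eq_zero_left <|
    (Submodule.Quotient.mk_eq_zero _).2 <| Submodule.subset_span <| .inl ⟨a, b, rfl⟩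

theorem tensorClass_mul_cyclic (a b c : A) :
    HA.tensorClass (HA.mul a b) (HA.α c) + HA.tensorClass (HA.mul b c) (HA.α a)
      + HA.tensorClass (HA.mul c a) (HA.α b) = 0 := by
  have hrel : HA.tensorClass (HA.mul a b) (HA.α c) - HA.tensorClass (HA.α a) (HA.mul b c)
      + HA.tensorClass (HA.mul c a) (HA.α b) = 0 :=
    (Submodule.Quotient.mk_eq_zero _).2 <| Submodule.subset_span <| .inr ⟨a, b, c, rfl⟩
  rwa [HA.tensorClass_skew (HA.α a), sub_neg_eq_add] at hrel

theorem tensorClass_leibniz (x a b : A) :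
    HA.tensorClass (HA.α x) (HA.commutator.br a b) =
      HA.tensorClass (HA.commutator.br x a) (HA.α b)
        + HA.tensorClass (HA.α a) (HA.commutator.br x b) := by
  rw [HA.tensorClass_skew (HA.α x), HA.tensorClass_skew (HA.α a), ← sub_eq_zero]
  simp only [commutator_br_apply, map_sub, LinearMap.sub_apply]
  linear_combination (norm := abel)
    HA.tensorClass_mul_cyclic a x b - HA.tensorClass_mul_cyclic x a b

theorem Jsub_le_ker_commutator : Jsub HA ≤ LinearMap.ker (TensorProduct.lift HA.commutator.br) := by
  rw [Jsub, Submodule.span_le]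
  rintro _ (⟨a, b, rfl⟩ | ⟨a, b, c, rfl⟩)
  · simp only [SetLike.mem_coe, LinearMap.mem_ker, map_add, TensorProduct.lift.tmul,
      commutator_br_apply]
    abel
  · simp only [SetLike.mem_coe, LinearMap.mem_ker, map_add, map_sub, TensorProduct.lift.tmul,
      commutator_br_apply, HA.hassoc]
    abel

theorem Jsub_le_comap_map_α : Jsub HA ≤ (Jsub HA).comap (TensorProduct.map HA.α HA.α) := by
  rw [Jsub, Submodule.span_le]
  rintro _ (⟨a, b, rfl⟩ | ⟨a, b, c, rfl⟩)
  · exact Submodule.subset_span <| .inl ⟨HA.α a, HA.α b, map_add _ _ _⟩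
  · refine Submodule.subset_span <| .inr ⟨HA.α a, HA.α b, HA.α c, ?_⟩
    simp only [map_add, map_sub, TensorProduct.map_tmul, HA.αmul]

/-- The commutator bracket of `A` lifts to `L^α(A)` through the classes of the pure tensors; the
induced Hom-Lie structure is that of `L^α(A)`. -/
def bracketLift : BracketLift HA.commutator ((A ⊗[K] A) ⧸ Jsub HA) where
  lift := HA.tensorClass
  proj := (Jsub HA).liftQ (TensorProduct.lift HA.commutator.br) HA.Jsub_le_ker_commutator
  α := (Jsub HA).mapQ (Jsub HA) (TensorProduct.map HA.α HA.α) HA.Jsub_le_comap_map_α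
  proj_lift _ _ := rfl
  proj_α := by
    refine LinearMap.congr_fun (f := Submodule.liftQ _ _ HA.Jsub_le_ker_commutator ∘ₗ
      Submodule.mapQ _ _ _ HA.Jsub_le_comap_map_α)
      (g := HA.α ∘ₗ Submodule.liftQ _ _ HA.Jsub_le_ker_commutator) ?_
    ext a b
    exact (HA.commutator.αbr a b).symm
  α_lift _ _ := rfl
  skew := HA.tensorClass_skew
  leibniz := HA.tensorClass_leibniz

end HomAssocStr

theorem statement18_general {K A : Type} [Field K] [AddCommGroup A] [Module K A]
    (HA : HomAssocStr K A)
    (HLA : HomLieStr K A)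
    (hHLA : (∀ a b, HLA.br a b = HA.mul a b - HA.mul b a) ∧ HLA.α = HA.α)
    (HLA' : HomLieStr K ((A ⊗[K] A) ⧸ Jsub HA))
    (hHLA' : (∀ a b a' b', HLA'.br ((Jsub HA).mkQ (a ⊗ₜ[K] b)) ((Jsub HA).mkQ (a' ⊗ₜ[K] b')) =
        (Jsub HA).mkQ (HLA.br a b ⊗ₜ[K] HLA.br a' b')) ∧
      (∀ a b, HLA'.α ((Jsub HA).mkQ (a ⊗ₜ[K] b)) = (Jsub HA).mkQ (HA.α a ⊗ₜ[K] HA.α b))) :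
    (∃ act1 : HomAction HLA HLA', ∀ a' a b,
        act1.act a' ((Jsub HA).mkQ (a ⊗ₜ[K] b)) =
        (Jsub HA).mkQ (HLA.br a' a ⊗ₜ[K] HA.α b) + (Jsub HA).mkQ (HA.α a ⊗ₜ[K] HLA.br a' b)) ∧
    (∃ act2 : HomAction HLA' HLA, ∀ a b a',
        act2.act ((Jsub HA).mkQ (a ⊗ₜ[K] b)) a' = HLA.br (HLA.br a b) a') ∧
    ((∀ a b, HLA.br a b = HLA.br (HA.α a) b) →
      ∀ (act1 : HomAction HLA HLA') (act2 : HomAction HLA' HLA),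
        (∀ a' a b, act1.act a' ((Jsub HA).mkQ (a ⊗ₜ[K] b)) =
          (Jsub HA).mkQ (HLA.br a' a ⊗ₜ[K] HA.α b)
            + (Jsub HA).mkQ (HA.α a ⊗ₜ[K] HLA.br a' b)) →
        (∀ a b a', act2.act ((Jsub HA).mkQ (a ⊗ₜ[K] b)) a' = HLA.br (HLA.br a b) a') →
        Compatible act1 act2) := by
  obtain rfl : HLA = HA.commutator := HomLieStr.ext (LinearMap.ext₂ hHLA.1) hHLA.2
  obtain rfl : HLA' = HA.bracketLift.homLieStr := by
    refine HomLieStr.ext ?_ ?_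
    · ext a b a' b'
      exact hHLA'.1 a b a' b'
    · ext a b
      exact hHLA'.2 a b
  let B := HA.bracketLift
  refine ⟨⟨B.liftAction, B.liftAction_act_lift⟩, ⟨B.projAction, B.projAction_act_lift⟩, ?_⟩
  intro hα act1 act2 hact1 hact2
  obtain rfl : act1 = B.liftAction := by
    ext x a b
    exact (hact1 x a b).trans (B.liftAction_act_lift x a b).symm
  obtain rfl : act2 = B.projAction := by
    ext a b x
    exact (hact2 a b x).trans (B.projAction_act_lift a b x).symm
  exact B.compatible_liftAction_projAction hα

/-- Let `(A, α_A)` be a Hom-associative algebra over a field of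
characteristic 0, with its commutator Hom-Lie structure `[a,b] = ab − ba`, and let
`(L^α(A), ᾱ_A)` be the Hom-Lie algebra `(A⊗A)/J(A,α)` with bracket
`[a⊗b, a'⊗b'] = [a,b]⊗[a',b']`.  Then
(1) `^{a'}(a⊗b) = [a',a]⊗α(b) + α(a)⊗[a',b]` defines a Hom-action of `(A, α_A)` on
`(L^α(A), ᾱ_A)` and `^{(a⊗b)}a' = [[a,b],a']` defines a Hom-action of `(L^α(A), ᾱ_A)` on
`(A, α_A)`; and (2) if `(A, α_A)` satisfies the α-identity condition
`[a,b] = [α(a),b]`, these two Hom-actions are compatible. -/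
theorem statement18 {K A : Type} [Field K] [CharZero K] [AddCommGroup A] [Module K A]
    (HA : HomAssocStr K A)
    -- the commutator Hom-Lie structure on A
    (HLA : HomLieStr K A)
    (hHLA : (∀ a b, HLA.br a b = HA.mul a b - HA.mul b a) ∧ HLA.α = HA.α)
    -- the Hom-Lie structure of L^α(A) on (A ⊗ A)/J(A,α)
    (HLA' : HomLieStr K ((A ⊗[K] A) ⧸ Jsub HA))
    (hHLA' : (∀ a b a' b', HLA'.br ((Jsub HA).mkQ (a ⊗ₜ[K] b)) ((Jsub HA).mkQ (a' ⊗ₜ[K] b')) =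
        (Jsub HA).mkQ (HLA.br a b ⊗ₜ[K] HLA.br a' b')) ∧
      (∀ a b, HLA'.α ((Jsub HA).mkQ (a ⊗ₜ[K] b)) = (Jsub HA).mkQ (HA.α a ⊗ₜ[K] HA.α b))) :
    (∃ act1 : HomAction HLA HLA', ∀ a' a b,
        act1.act a' ((Jsub HA).mkQ (a ⊗ₜ[K] b)) =
        (Jsub HA).mkQ (HLA.br a' a ⊗ₜ[K] HA.α b) + (Jsub HA).mkQ (HA.α a ⊗ₜ[K] HLA.br a' b)) ∧
    (∃ act2 : HomAction HLA' HLA, ∀ a b a',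
        act2.act ((Jsub HA).mkQ (a ⊗ₜ[K] b)) a' = HLA.br (HLA.br a b) a') ∧
    ((∀ a b, HLA.br a b = HLA.br (HA.α a) b) →
      ∀ (act1 : HomAction HLA HLA') (act2 : HomAction HLA' HLA),
        (∀ a' a b, act1.act a' ((Jsub HA).mkQ (a ⊗ₜ[K] b)) =
          (Jsub HA).mkQ (HLA.br a' a ⊗ₜ[K] HA.α b)
            + (Jsub HA).mkQ (HA.α a ⊗ₜ[K] HLA.br a' b)) →
        (∀ a b a', act2.act ((Jsub HA).mkQ (a ⊗ₜ[K] b)) a' = HLA.br (HLA.br a b) a') →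
        Compatible act1 act2) :=
  statement18_general HA HLA hHLA HLA' hHLA'
end
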